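/- arXiv:1506.04011 — 2 statements merged into one kernel-verified Lean document; each statement's English description precedes it below -/
import Mathlib

section
/- Let p be an odd prime and (E,†) a simple ℚ_p-algebra with involution such that E is split and the center of E is unramified over ℚ_p. Let R ⊂ E be a †-stable maximal order. Let q be a unit of R and suppose a ∈ E satisfies a†·q·a ∈ ℚ_p^×. Then either (i) the p-adic valuation v_p(a†·q·a) is even, or (ii) there exists an invertible b ∈ E with b†·q·b = 1. -/
/-!
# Unit forms over maximal orders in split `p`-adic algebras with involution

Suppose that `a† q a = m` has odd valuation. Since `m ≠ 0`, `a` is invertible, and applying `†` gives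
`q† = q`. Let `e` be the central idempotent of a simple factor of `E`. By simplicity of `(E, †)`, either
`e = 1`, or `†` exchanges `e` with `1 - e`. In the second case `b = e + q⁻¹ e†` solves `b† q b = 1`
(`IsInv.exists_of_swap`).

In the first case `E = M_n(K)` with `K` unramified over `ℚ_p`. The prime `p` is a uniformizer of the
ring of integers `O` of `K` (`exists_eq_p_mul_of_not_isIntegral_inv`), and the maximal order is `M_n(O)`
in a suitable basis (`exists_integral_model`), so `†` induces an involution of `M_n(k)`, where `k` is
the residue field, finite of odd characteristic. By Skolem–Noether this involution is adjunction for a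
sesquilinear form `H`, and writing the reduction of `q` as `s† s` amounts to finding an isometry between
the forms `H` and `H q`. Over a finite field nondegenerate hermitian forms for a nontrivial involution,
and alternating forms, are classified by their rank, and symmetric forms by rank and discriminant
(`cong_of_hermitian`, `cong_of_skew`). Only in the symmetric case is there an obstruction, the class of
`det q` modulo squares. It vanishes because determinants give `m ^ n = det q * (det a) ^ 2` with `det q`
a unit: as `m` has odd valuation and `p` is a uniformizer, `n` is even, and `det q` is a square.

Lifting `s` to `M_n(O)` and replacing `q` by `(s⁻¹)† q s⁻¹`, one may assume `q` congruent to `1` modulo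
`p`. The commutative algebra `ℤ_p[q]` is `p`-adically complete and `†` is trivial on it, so as `p` is
odd Hensel's lemma yields a symmetric `t` with `t² = q` (`IsInv.exists_symmetric_sqrt`), and `b = t⁻¹`.
-/

/-- `dag` is an involution of the `ℚ_p`-algebra `E`. -/
def IsInvolutionQp (p : ℕ) [Fact p.Prime] (E : Type*) [Ring E] [Algebra ℚ_[p] E]
    (dag : E → E) : Prop :=
  (∀ x y : E, dag (x + y) = dag x + dag y) ∧
  (∀ x y : E, dag (x * y) = dag y * dag x) ∧
  (∀ x : E, dag (dag x) = x) ∧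
  (∀ r : ℚ_[p], dag (algebraMap ℚ_[p] E r) = algebraMap ℚ_[p] E r)

/-- Witness that the `ℚ_p`-algebra `E` is split (a finite product of matrix algebras
over fields) with centre a product of unramified extensions of `ℚ_p` (every finite
unramified extension of `ℚ_p` is generated by a root of unity of order prime to `p`). -/
structure UnramifiedSplitting (p : ℕ) [Fact p.Prime] (E : Type*) [Ring E]
    [Algebra ℚ_[p] E] where
  n : ℕ
  K : Fin n → Type
  [fieldK : ∀ i, Field (K i)]
  [algK : ∀ i, Algebra ℚ_[p] (K i)]
  finK : ∀ i, FiniteDimensional ℚ_[p] (K i)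
  unramK : ∀ i, ∃ (m : ℕ) (x : K i), 0 < m ∧ ¬ p ∣ m ∧ IsPrimitiveRoot x m ∧
    Algebra.adjoin ℚ_[p] {x} = ⊤
  d : Fin n → ℕ
  dpos : ∀ i, 0 < d i
  equiv : E ≃ₐ[ℚ_[p]] ∀ i, Matrix (Fin (d i)) (Fin (d i)) (K i)

/-- `R` is an order in the finite-dimensional `ℚ_p`-algebra `E`. -/
def IsOrderZp (p : ℕ) [Fact p.Prime] (E : Type*) [Ring E] [Algebra ℚ_[p] E]
    [Algebra ℤ_[p] E] [IsScalarTower ℤ_[p] ℚ_[p] E] (R : Subalgebra ℤ_[p] E) : Prop :=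
  (Subalgebra.toSubmodule R).FG ∧ Submodule.span ℚ_[p] (R : Set E) = ⊤

/-! ### Forms over finite fields of odd characteristic -/

namespace UnitForms

open Matrix

section Forms

variable {F : Type*} [Field F]

/-- A nondegenerate diagonal binary quadratic form over a finite field of odd characteristic represents every
element. -/
theorem exists_sum_sq [Finite F] (h2 : (2 : F) ≠ 0) {a b : F} (ha : a ≠ 0) (hb : b ≠ 0) (c : F) :
    ∃ x y : F, a * x ^ 2 + b * y ^ 2 = c := by
  classical
  have := Fintype.ofFinite F
  have hodd : Fintype.card F % 2 = 1 := by
    refine FiniteField.odd_card_of_char_ne_two ?_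
    intro h
    apply h2
    have : CharP F 2 := by rw [← h]; exact ringChar.charP F
    exact_mod_cast CharP.cast_eq_zero F 2
  obtain ⟨x, y, h⟩ := FiniteField.exists_root_sum_quadratic
    (f := Polynomial.C a * Polynomial.X ^ 2 + Polynomial.C 0 * Polynomial.X + Polynomial.C (-c))
    (g := Polynomial.C b * Polynomial.X ^ 2 + Polynomial.C 0 * Polynomial.X + Polynomial.C 0)
    (Polynomial.degree_quadratic ha) (Polynomial.degree_quadratic hb) hodd
  refine ⟨x, y, ?_⟩
  simp at h
  linear_combination h

variable [StarRing F]

/-- Surjectivity of the norm from a finite field to the fixed field of a nontrivial involution. With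
`d = z - star z`, so that `star d = -d`, the norm of `x + y d` for fixed `x`, `y` is the binary form
`x² - d² y²` over the fixed field, which represents everything. -/
theorem exists_norm_eq [Finite F] (h2 : (2 : F) ≠ 0) {z : F} (hz : star z ≠ z) {a : F}
    (ha : star a = a) : ∃ c : F, star c * c = a := by
  let F₀ : Subfield F :=
    { carrier := {x | star x = x}
      mul_mem' := by intro x y hx hy; simp only [Set.mem_ofPred_eq] at *; rw [star_mul', hx, hy]
      one_mem' := by simp
      add_mem' := by intro x y hx hy; simp only [Set.mem_ofPred_eq] at *; rw [star_add, hx, hy]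
      zero_mem' := by simp
      neg_mem' := by intro x hx; simp only [Set.mem_ofPred_eq] at *; rw [star_neg, hx]
      inv_mem' := by intro x hx; simp only [Set.mem_ofPred_eq] at *; rw [star_inv₀, hx] }
  set d := z - star z with hd
  have hds : star d = -d := by simp [hd]
  have hd0 : d ≠ 0 := fun h => hz (sub_eq_zero.mp h).symm
  have hD : star (d * d) = d * d := by rw [star_mul', hds]; ring
  let D : F₀ := ⟨-(d * d), by change star _ = _; rw [star_neg, hD]⟩
  have h20 : (2 : F₀) ≠ 0 := fun h => h2 (congrArg (fun t : F₀ => (t : F)) h)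
  have hD0 : D ≠ 0 := by
    intro h
    have : -(d * d) = 0 := congrArg (fun t : F₀ => (t : F)) h
    simp [hd0] at this
  obtain ⟨x, y, h⟩ := exists_sum_sq h20 one_ne_zero hD0 (⟨a, ha⟩ : F₀)
  have h' : 1 * (x : F) ^ 2 + -(d * d) * (y : F) ^ 2 = a := congrArg (fun t : F₀ => (t : F)) h
  have hx : star (x : F) = x := x.2
  have hy : star (y : F) = y := y.2
  refine ⟨x + y * d, ?_⟩
  rw [star_add, star_mul', hx, hy, hds]
  linear_combination h'

set_option linter.unusedSectionVars false

variable {ι κ μ : Type*} [Fintype ι] [DecidableEq ι] [Fintype κ] [DecidableEq κ]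
  [Fintype μ] [DecidableEq μ]

/-- Congruence of Gram matrices: `Q` is the Gram matrix, in another basis, of the sesquilinear form
with Gram matrix `H`. -/
def Cong (H Q : Matrix ι ι F) : Prop := ∃ S : Matrix ι ι F, IsUnit S ∧ Sᴴ * H * S = Q

theorem Cong.trans {H Q T : Matrix ι ι F} (h : Cong H Q) (h' : Cong Q T) : Cong H T := by
  obtain ⟨S, hS, rfl⟩ := h
  obtain ⟨S', hS', rfl⟩ := h'
  exact ⟨S * S', hS.mul hS', by simp only [conjTranspose_mul, Matrix.mul_assoc]⟩

theorem Cong.symm {H Q : Matrix ι ι F} (h : Cong H Q) : Cong Q H := by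
  obtain ⟨S, hS, rfl⟩ := h
  obtain ⟨U, rfl⟩ := hS
  refine ⟨(U⁻¹ : (Matrix ι ι F)ˣ).1, Units.isUnit _, ?_⟩
  have h1 : (U.1 : Matrix ι ι F) * (U⁻¹).1 = 1 := Units.mul_inv U
  have h2 : ((U⁻¹).1 : Matrix ι ι F)ᴴ * (U.1)ᴴ = 1 := by
    rw [← conjTranspose_mul, h1, conjTranspose_one]
  calc _ = (((U⁻¹).1 : Matrix ι ι F)ᴴ * (U.1)ᴴ) * H * (U.1 * (U⁻¹).1) := by
        simp only [Matrix.mul_assoc]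
    _ = H := by rw [h1, h2, Matrix.one_mul, Matrix.mul_one]

theorem Cong.isUnit {H Q : Matrix ι ι F} (h : Cong H Q) (hH : IsUnit H) : IsUnit Q := by
  obtain ⟨S, hS, rfl⟩ := h
  exact (hS.star.mul hH).mul hS

theorem Cong.herm {H Q : Matrix ι ι F} (h : Cong H Q) (hH : Hᴴ = H) : Qᴴ = Q := by
  obtain ⟨S, hS, rfl⟩ := h
  simp only [conjTranspose_mul, hH, conjTranspose_conjTranspose, Matrix.mul_assoc]

theorem Cong.skew {H Q : Matrix ι ι F} (h : Cong H Q) (hH : Hᴴ = -H) : Qᴴ = -Q := by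
  obtain ⟨S, hS, rfl⟩ := h
  simp [conjTranspose_mul, hH, Matrix.mul_assoc]

theorem Cong.submatrix {H Q : Matrix ι ι F} (h : Cong H Q) (e : κ ≃ ι) :
    Cong (H.submatrix e e) (Q.submatrix e e) := by
  obtain ⟨S, hS, rfl⟩ := h
  refine ⟨S.submatrix e e, ?_, ?_⟩
  · rw [isUnit_iff_isUnit_det] at hS ⊢
    rwa [det_submatrix_equiv_self]
  · rw [conjTranspose_submatrix, submatrix_mul_equiv, submatrix_mul_equiv]

theorem cong_submatrix_perm (H : Matrix ι ι F) (e : ι ≃ ι) : Cong H (H.submatrix e e) := by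
  refine ⟨(1 : Matrix ι ι F).submatrix id e, ?_, ?_⟩
  · rw [isUnit_iff_isUnit_det]
    rw [det_permute', det_one, mul_one]
    exact (Units.isUnit _).map (Int.castRingHom F)
  · rw [conjTranspose_submatrix, conjTranspose_one]
    ext i j
    simp [Matrix.mul_apply, Matrix.one_apply]

theorem cong_fromBlocks {A : Matrix μ μ F} {D D' : Matrix κ κ F} (h : Cong D D') :
    Cong (fromBlocks A 0 0 D) (fromBlocks A 0 0 D') := by
  obtain ⟨S, hS, rfl⟩ := h
  refine ⟨fromBlocks 1 0 0 S, ?_, ?_⟩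
  · rw [isUnit_iff_isUnit_det] at hS ⊢
    simpa using hS
  · simp [fromBlocks_conjTranspose, fromBlocks_multiply]

/-- Orthogonal splitting of an `e`-hermitian form, `e = ±1`, along a subspace on which it is
nondegenerate, via the Schur complement. The hypotheses only record that the blocks `A`, `B`, `C` are
those of an `e`-hermitian matrix. -/
theorem cong_schur (e : F) (he : e = 1 ∨ e = -1) {A : Matrix μ μ F} (hA : IsUnit A)
    {B : Matrix μ κ F} {C : Matrix κ μ F} {D : Matrix κ κ F}
    (hAe : Aᴴ = e • A) (hB : Bᴴ = e • C) :
    ∃ D', Cong (fromBlocks A B C D) (fromBlocks A 0 0 D') := by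
  have := hA.invertible
  refine ⟨D - C * ⅟A * B, Cong.symm ⟨fromBlocks 1 (⅟A * B) 0 1, ?_, ?_⟩⟩
  · rw [isUnit_iff_isUnit_det]; simp
  · rw [fromBlocks_eq_of_invertible₁₁ A B C D]
    congr 2
    rw [fromBlocks_conjTranspose]
    congr 1
    · simp
    · simp
    · have h1 : (⅟A)ᴴ = e • ⅟A := by
        have h2 : Aᴴ * (⅟A)ᴴ = 1 := by rw [← conjTranspose_mul]; simp
        rw [hAe] at h2
        calc (⅟A)ᴴ = (⅟A * A) * (⅟A)ᴴ := by simp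
          _ = (e * e) • ((⅟A * A) * (⅟A)ᴴ) := by rcases he with rfl | rfl <;> simp
          _ = e • ⅟A * (e • A * (⅟A)ᴴ) := by
            simp only [Matrix.smul_mul, Matrix.mul_smul, smul_smul, Matrix.mul_assoc]
          _ = _ := by rw [h2, Matrix.mul_one]
      rw [conjTranspose_mul, h1, hB]
      rcases he with rfl | rfl <;> simp
    · simp

/-- The value at `v` of the form with Gram matrix `H`. -/
def form (H : Matrix ι ι F) (v : ι → F) : F := star v ⬝ᵥ (H *ᵥ v)

theorem form_mulVec (H S : Matrix ι ι F) (v : ι → F) :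
    form H (S *ᵥ v) = form (Sᴴ * H * S) v := by
  simp only [form, star_mulVec, ← mulVec_mulVec, dotProduct_mulVec, vecMul_vecMul, Matrix.mul_assoc]

theorem star_form {H : Matrix ι ι F} (hH : Hᴴ = H) (v : ι → F) : star (form H v) = form H v := by
  unfold form
  conv_rhs => rw [← hH, dotProduct_mulVec, ← star_mulVec]
  rw [← Matrix.star_dotProduct_star, star_star, dotProduct_comm]

theorem form_smul (H : Matrix ι ι F) (c : F) (v : ι → F) :
    form H (c • v) = star c * c * form H v := by
  simp [form, mulVec_smul]
  ring

/-- Polarization: a nonzero hermitian form takes a nonzero value. -/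
theorem exists_form_ne_zero (h2 : (2 : F) ≠ 0) {H : Matrix ι ι F} (hH : Hᴴ = H) (h0 : H ≠ 0) :
    ∃ v, form H v ≠ 0 := by
  by_contra! hc
  apply h0
  ext i j
  by_contra hij
  have key : ∀ c : F, c * H i j + star c * H j i = 0 := by
    intro c
    have h1 := hc (Pi.single i 1 + Pi.single j c)
    have h2 := hc (Pi.single i 1)
    have h3 := hc (Pi.single j c)
    simp only [form, star_add, mulVec_add, add_dotProduct, dotProduct_add] at h1 h2 h3
    rw [h2, h3] at h1
    simp at h1
    linear_combination h1
  have hji : H j i = star (H i j) := by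
    conv_lhs => rw [← hH]
    rfl
  have := key ((H i j)⁻¹)
  rw [hji, ← star_mul', inv_mul_cancel₀ hij, star_one] at this
  apply h2
  linear_combination this

/-- A vector of nonzero value splits off as a one-dimensional orthogonal summand. -/
theorem exists_cong_pivot {H : Matrix (Unit ⊕ κ) (Unit ⊕ κ) F} (hH : Hᴴ = H)
    {v : Unit ⊕ κ → F} (hv : form H v ≠ 0) :
    ∃ D, Cong H (fromBlocks (Matrix.diagonal fun _ : Unit => form H v) 0 0 D) := by
  have hv0 : v ≠ 0 := by rintro rfl; simp [form] at hv
  obtain ⟨i, hi⟩ := Function.ne_iff.mp hv0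
  let T := ((1 : Matrix (Unit ⊕ κ) (Unit ⊕ κ) F).updateCol i v).submatrix id
    (Equiv.swap (Sum.inl ()) i)
  have hT : IsUnit T := by
    rw [isUnit_iff_isUnit_det, det_permute']
    refine IsUnit.mul ?_ ?_
    · exact (Units.isUnit _).map (Int.castRingHom F)
    · rw [← cramer_apply]; simpa using hi
  have hTv : T *ᵥ (Pi.single (Sum.inl ()) 1) = v := by
    ext j
    simp [T]
  have hc : Cong H (Tᴴ * H * T) := ⟨T, hT, rfl⟩
  have h0 : (Tᴴ * H * T).toBlocks₁₁ = Matrix.diagonal fun _ : Unit => form H v := by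
    ext a b
    rw [← hTv, form_mulVec]
    simp [form, toBlocks₁₁]
  have hh := hc.herm hH
  rw [← fromBlocks_toBlocks (Tᴴ * H * T), fromBlocks_conjTranspose, fromBlocks_inj] at hh
  obtain ⟨D, hD⟩ := cong_schur (A := (Tᴴ * H * T).toBlocks₁₁) (B := (Tᴴ * H * T).toBlocks₁₂)
    (C := (Tᴴ * H * T).toBlocks₂₁) (D := (Tᴴ * H * T).toBlocks₂₂) 1 (Or.inl rfl)
    (by rw [h0, isUnit_iff_isUnit_det]; simpa using hv) (by simpa using hh.1)
    (by simpa using hh.2.2.1)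
  rw [fromBlocks_toBlocks, h0] at hD
  exact ⟨D, hc.trans hD⟩

/-- A nondegenerate hermitian form over a finite field represents `1`, except possibly when it is a
symmetric form in one variable. A nontrivial `star` allows a value to be rescaled by a norm;
otherwise a two-dimensional orthogonal summand already represents `1`. -/
theorem exists_form_eq_one [Finite F] (h2 : (2 : F) ≠ 0) {H : Matrix (Unit ⊕ κ) (Unit ⊕ κ) F}
    (hH : Hᴴ = H) (hu : IsUnit H) (hc : (∃ z : F, star z ≠ z) ∨ Nonempty κ) :
    ∃ v, form H v = 1 := by
  have h0 : H ≠ 0 := hu.ne_zero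
  obtain ⟨v, hv⟩ := exists_form_ne_zero h2 hH h0
  by_cases hst : ∃ z : F, star z ≠ z
  · obtain ⟨z, hz⟩ := hst
    obtain ⟨c, hc⟩ := exists_norm_eq h2 hz (a := (form H v)⁻¹) (by rw [star_inv₀, star_form hH])
    exact ⟨c • v, by rw [form_smul, hc, inv_mul_cancel₀ hv]⟩
  · have hκ : Nonempty κ := hc.resolve_left hst
    push Not at hst
    obtain ⟨D, hD⟩ := exists_cong_pivot hH hv
    have hDu := hD.isUnit hu
    have hDh := hD.herm hH
    rw [fromBlocks_conjTranspose, fromBlocks_inj] at hDh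
    have hD0 : D ≠ 0 := by
      rintro rfl
      rw [isUnit_iff_isUnit_det] at hDu
      simp at hDu
    obtain ⟨w, hw⟩ := exists_form_ne_zero h2 hDh.2.2.2 hD0
    obtain ⟨x, y, hxy⟩ := exists_sum_sq h2 hv hw 1
    obtain ⟨S, -, hS⟩ := hD
    refine ⟨S *ᵥ Sum.elim (fun _ => x) (y • w), ?_⟩
    rw [form_mulVec, hS]
    have hst' : star (Sum.elim (fun _ : Unit => x) (y • w)) =
        Sum.elim (fun _ : Unit => x) (y • star w) := by
      ext i; cases i <;> simp [hst]
    rw [← hxy, form, fromBlocks_mulVec, hst', sumElim_dotProduct_sumElim]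
    simp only [Function.comp_def, Sum.elim_inl, Sum.elim_inr, zero_mulVec, add_zero, zero_add]
    congr 1
    · simp [dotProduct, mulVec]; ring
    · change y • star w ⬝ᵥ D *ᵥ (y • w) = form D w * y ^ 2
      rw [mulVec_smul, smul_dotProduct, dotProduct_smul, form]
      simp; ring

/-- Nondegenerate hermitian forms of the same rank over a finite field of odd characteristic are
congruent, provided that their discriminants agree modulo squares when `star` is trivial. -/
theorem cong_of_hermitian [Finite F] (h2 : (2 : F) ≠ 0) (n : ℕ) :
    ∀ H Q : Matrix (Fin n) (Fin n) F, Hᴴ = H → Qᴴ = Q → IsUnit H → IsUnit Q →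
      ((∀ z : F, star z = z) → IsSquare (H.det * Q.det)) → Cong H Q := by
  induction n with
  | zero =>
    intro H Q _ _ _ _ _
    exact ⟨1, isUnit_one, Subsingleton.elim _ _⟩
  | succ n ih =>
    intro H Q hH hQ hHu hQu hsq
    by_cases hbase : (∀ z : F, star z = z) ∧ n = 0
    · obtain ⟨hst, rfl⟩ := hbase
      obtain ⟨y, hy⟩ := hsq hst
      rw [isUnit_iff_isUnit_det] at hHu hQu
      have hd : ∀ M : Matrix (Fin (0 + 1)) (Fin (0 + 1)) F, M.det = M 0 0 := fun M => det_fin_one M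
      rw [hd] at hHu hQu
      rw [hd, hd] at hy
      have hH0 : H 0 0 ≠ 0 := hHu.ne_zero
      have hy0 : y ≠ 0 := by
        rintro rfl
        simp [hHu.ne_zero, hQu.ne_zero] at hy
      refine ⟨Matrix.diagonal fun _ => y / H 0 0, ?_, ?_⟩
      · rw [isUnit_iff_isUnit_det]; simp [hy0, hH0]
      · ext i j
        fin_cases i; fin_cases j
        simp [diagonal_conjTranspose, hst]
        field_simp
        linear_combination -hy
    · have hc : (∃ z : F, star z ≠ z) ∨ Nonempty (Fin n) := by
        by_cases h : ∀ z : F, star z = z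
        · right
          exact ⟨⟨0, Nat.pos_of_ne_zero fun h' => hbase ⟨h, h'⟩⟩⟩
        · left; push Not at h; exact h
      have e : Unit ⊕ Fin n ≃ Fin (n + 1) := Fintype.equivOfCardEq (by simp [add_comm])
      have key : ∀ H : Matrix (Fin (n + 1)) (Fin (n + 1)) F, Hᴴ = H → IsUnit H →
          ∃ D : Matrix (Fin n) (Fin n) F, Dᴴ = D ∧ IsUnit D ∧
            Cong (H.submatrix e e) (fromBlocks 1 0 0 D) := by
        intro H hH hHu
        have hH' : (H.submatrix e e)ᴴ = H.submatrix e e := by rw [conjTranspose_submatrix, hH]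
        have hHu' : IsUnit (H.submatrix e e) := by
          rw [isUnit_iff_isUnit_det] at hHu ⊢
          rwa [det_submatrix_equiv_self]
        obtain ⟨v, hv⟩ := exists_form_eq_one h2 hH' hHu' hc
        obtain ⟨D, hD⟩ := exists_cong_pivot hH' (v := v) (by rw [hv]; exact one_ne_zero)
        rw [hv, diagonal_one] at hD
        have h1 := hD.isUnit hHu'
        have h3 := hD.herm hH'
        rw [fromBlocks_conjTranspose, fromBlocks_inj] at h3
        rw [isUnit_iff_isUnit_det] at h1
        exact ⟨D, h3.2.2.2, by rw [isUnit_iff_isUnit_det]; simpa using h1, hD⟩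
      obtain ⟨D, hD, hDu, hDc⟩ := key H hH hHu
      obtain ⟨D', hD', hDu', hDc'⟩ := key Q hQ hQu
      have hDD : Cong D D' := by
        refine ih D D' hD hD' hDu hDu' fun hst => ?_
        obtain ⟨y, hy⟩ := hsq hst
        obtain ⟨S, hS, hSe⟩ := hDc
        obtain ⟨S', hS', hSe'⟩ := hDc'
        have a1 := congrArg det hSe
        have a2 := congrArg det hSe'
        simp only [det_mul, det_conjTranspose, hst, det_submatrix_equiv_self,
          det_fromBlocks_zero₂₁, det_one, one_mul] at a1 a2
        refine ⟨S.det * S'.det * y, ?_⟩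
        rw [← a1, ← a2]
        linear_combination (S.det * S'.det) ^ 2 * hy
      have := ((hDc.trans (cong_fromBlocks hDD)).trans hDc'.symm).submatrix e.symm
      simpa using this

/-- Nondegenerate alternating forms of the same rank are congruent: a hyperbolic plane splits off. -/
theorem cong_of_skew (h2 : (2 : F) ≠ 0) (hst : ∀ z : F, star z = z) (n : ℕ) :
    ∀ H Q : Matrix (Fin n) (Fin n) F, Hᴴ = -H → Qᴴ = -Q → IsUnit H → IsUnit Q → Cong H Q := by
  have hdiag : ∀ {m : ℕ} {H : Matrix (Fin m) (Fin m) F}, Hᴴ = -H → ∀ i, H i i = 0 := by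
    intro m H hH i
    have := congrFun (congrFun hH i) i
    simp only [conjTranspose_apply, hst, Matrix.neg_apply] at this
    have h3 : 2 * H i i = 0 := by linear_combination this
    exact (mul_eq_zero.mp h3).resolve_left h2
  induction n using Nat.strong_induction_on with
  | _ n ih =>
  match n, ih with
  | 0, _ =>
    intro H Q _ _ _ _
    exact ⟨1, isUnit_one, Subsingleton.elim _ _⟩
  | 1, _ =>
    intro H Q hH _ hHu _
    exfalso
    apply hHu.ne_zero
    ext i j
    rw [Subsingleton.elim j i]
    exact hdiag hH i
  | n + 2, ih =>
    intro H Q hH hQ hHu hQu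
    have e : Fin 2 ⊕ Fin n ≃ Fin (n + 2) := Fintype.equivOfCardEq (by simp [add_comm])
    have key : ∀ H : Matrix (Fin (n + 2)) (Fin (n + 2)) F, Hᴴ = -H → IsUnit H →
        ∃ D : Matrix (Fin n) (Fin n) F, Dᴴ = -D ∧ IsUnit D ∧
          Cong (H.submatrix e e) (fromBlocks !![0, 1; -1, 0] 0 0 D) := by
      intro H hH hHu
      obtain ⟨i, j, hij⟩ : ∃ i j, H i j ≠ 0 := by
        by_contra! h
        exact hHu.ne_zero (Matrix.ext h)
      have hne : i ≠ j := by rintro rfl; exact hij (hdiag hH i)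
      obtain ⟨π, hπi, hπj⟩ : ∃ π : Fin 2 ⊕ Fin n ≃ Fin (n + 2),
          π (Sum.inl 0) = i ∧ π (Sum.inl 1) = j := by
        let e' := e.trans (Equiv.swap (e (Sum.inl 0)) i)
        have h0 : e' (Sum.inl 0) = i := by simp [e']
        refine ⟨e'.trans (Equiv.swap (e' (Sum.inl 1)) j), ?_, by simp⟩
        rw [Equiv.trans_apply, h0, Equiv.swap_apply_of_ne_of_ne _ hne]
        rw [← h0]
        intro h
        simpa using e'.injective h
      have c1 : Cong (H.submatrix e e) (H.submatrix π π) := by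
        have := (cong_submatrix_perm H (e.symm.trans π)).submatrix e
        simpa [Function.comp_def] using this
      -- rescaling of the first basis vector, so that the first two pair to `1`
      let w : Fin 2 ⊕ Fin n → F := Function.update 1 (Sum.inl 0) (H i j)⁻¹
      let H' := (Matrix.diagonal w)ᴴ * H.submatrix π π * Matrix.diagonal w
      have c2 : Cong (H.submatrix π π) H' := by
        refine ⟨Matrix.diagonal w, ?_, rfl⟩
        rw [isUnit_iff_isUnit_det, det_diagonal, IsUnit.prod_univ_iff]
        intro k
        by_cases hk : k = Sum.inl 0
        · subst hk; simp [w, hij]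
        · simp [w, Function.update_of_ne hk]
      have hHH : (H.submatrix e e)ᴴ = -(H.submatrix e e) := by
        rw [conjTranspose_submatrix, hH]; rfl
      have hHu' : IsUnit (H.submatrix e e) := by
        rw [isUnit_iff_isUnit_det] at hHu ⊢
        rwa [det_submatrix_equiv_self]
      have hs := (c1.trans c2).skew hHH
      have hA : H'.toBlocks₁₁ = !![0, 1; -1, 0] := by
        have hji : H j i = - H i j := by
          have := congrFun (congrFun hH j) i
          simp only [conjTranspose_apply, hst, Matrix.neg_apply] at this
          rw [this, neg_neg]
        ext a b
        fin_cases a <;> fin_cases b <;>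
          simp [H', toBlocks₁₁, diagonal_conjTranspose, hst, hπi, hπj, w, hdiag hH, hji, hij]
      rw [← fromBlocks_toBlocks H', fromBlocks_conjTranspose, fromBlocks_neg,
        fromBlocks_inj] at hs
      obtain ⟨D, hD⟩ := cong_schur (A := H'.toBlocks₁₁) (B := H'.toBlocks₁₂)
        (C := H'.toBlocks₂₁) (D := H'.toBlocks₂₂) (-1) (Or.inr rfl)
        (by rw [hA, isUnit_iff_isUnit_det]; simp [det_fin_two])
        (by simpa using hs.1) (by simpa using hs.2.2.1)
      rw [fromBlocks_toBlocks, hA] at hD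
      have hc := (c1.trans c2).trans hD
      have hs' := hc.skew hHH
      rw [fromBlocks_conjTranspose, fromBlocks_neg, fromBlocks_inj] at hs'
      have hu := hc.isUnit hHu'
      rw [isUnit_iff_isUnit_det] at hu
      exact ⟨D, hs'.2.2.2, by rw [isUnit_iff_isUnit_det]; simpa [det_fin_two] using hu, hc⟩
    obtain ⟨D, hD, hDu, hDc⟩ := key H hH hHu
    obtain ⟨D', hD', hDu', hDc'⟩ := key Q hQ hQu
    have hDD : Cong D D' := ih n (by omega) D D' hD hD' hDu hDu'
    have := ((hDc.trans (cong_fromBlocks hDD)).trans hDc'.symm).submatrix e.symm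
    simpa using this

end Forms
end UnitForms

/-! ### Involutions of matrix algebras over a field -/

namespace UnitForms
open Matrix
section Involution

variable {F : Type*} [Field F] {n : ℕ}

/-- An additive anti-multiplicative map whose square is the identity. -/
structure IsInv {A : Type*} [Ring A] (dag : A → A) : Prop where
  add : ∀ x y, dag (x + y) = dag x + dag y
  mul : ∀ x y, dag (x * y) = dag y * dag x
  inv : ∀ x, dag (dag x) = x

namespace IsInv

variable {A : Type*} [Ring A] {dag : A → A} (h : IsInv dag)
include h

theorem one : dag 1 = 1 := by
  have h1 := h.mul (dag 1) 1
  rw [mul_one, h.inv, mul_one] at h1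
  exact h1.symm

theorem zero : dag 0 = 0 := by
  have h1 := h.add 0 0
  rw [add_zero] at h1
  exact left_eq_add.mp h1

theorem sub (x y : A) : dag (x - y) = dag x - dag y := by
  have := h.add (x - y) y
  rw [sub_add_cancel] at this
  rw [this, add_sub_cancel_right]

theorem isUnit {x : A} (hx : IsUnit x) : IsUnit (dag x) := by
  obtain ⟨u, rfl⟩ := hx
  exact ⟨⟨dag u, dag (u⁻¹).1, by rw [← h.mul, Units.inv_mul, h.one],
    by rw [← h.mul, Units.mul_inv, h.one]⟩, rfl⟩

end IsInv

/-- Skolem–Noether for a matrix algebra over a field. -/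
theorem exists_conj_of_algEquiv (f : Matrix (Fin n) (Fin n) F ≃ₐ[F] Matrix (Fin n) (Fin n) F) :
    ∃ T : Matrix (Fin n) (Fin n) F, IsUnit T ∧ ∀ x, f x * T = T * x := by
  let e : Matrix (Fin n) (Fin n) F ≃ₐ[F] Module.End F (Fin n → F) := Matrix.toLinAlgEquiv'
  obtain ⟨T, hT⟩ := ((e.symm.trans f).trans e).eq_linearEquivConjAlgEquiv
  have key : ∀ x, e (f x) * (T : Module.End F (Fin n → F)) = (T : Module.End F (Fin n → F)) * e x := by
    intro x
    have := congrArg (fun g => g (e x)) hT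
    simp only [AlgEquiv.trans_apply, AlgEquiv.symm_apply_apply] at this
    rw [this]
    ext v
    simp
  refine ⟨e.symm (T : Module.End F (Fin n → F)), ?_, ?_⟩
  · have : IsUnit (T : Module.End F (Fin n → F)) := by
      rw [Module.End.isUnit_iff]; exact T.bijective
    exact this.map e.symm
  · intro x
    apply e.injective
    rw [map_mul, map_mul, e.apply_symm_apply, key]

/-- An involution of `M_n(F)` acts on the scalars through an involution `σ` of `F`, and is adjunction
with respect to some nondegenerate `σ`-sesquilinear form `H`: Skolem–Noether applies to its composite
with the conjugate transpose. -/
theorem IsInv.exists_conj (hn : 0 < n)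
    {dag : Matrix (Fin n) (Fin n) F → Matrix (Fin n) (Fin n) F} (h : IsInv dag) :
    ∃ (σ : F →+* F) (H : Matrix (Fin n) (Fin n) F), (∀ c, σ (σ c) = c) ∧
      (∀ c, dag (scalar (Fin n) c) = scalar (Fin n) (σ c)) ∧ IsUnit H ∧
      ∀ x, H * dag x = (x.map σ)ᵀ * H := by
  have : Nonempty (Fin n) := ⟨⟨0, hn⟩⟩
  have hex : ∀ c : F, ∃ d : F, dag (scalar (Fin n) c) = scalar (Fin n) d := by
    intro c
    have : dag (scalar (Fin n) c) ∈ Set.range (scalar (Fin n)) := by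
      rw [mem_range_scalar_iff_commute_single']
      intro i j
      have h1 : Commute (scalar (Fin n) c) (dag (single i j 1)) := scalar_commute c (Commute.all c) _
      have h2 := congrArg dag h1.eq
      rw [h.mul, h.mul, h.inv] at h2
      exact h2
    obtain ⟨d, hd⟩ := this
    exact ⟨d, hd.symm⟩
  choose σ₀ hσ₀ using hex
  have hinj : Function.Injective (scalar (Fin n) : F →+* _) :=
    fun a b hab => scalar_inj.1 hab
  let σ : F →+* F :=
    { toFun := σ₀
      map_one' := hinj (by rw [← hσ₀, map_one, h.one])
      map_zero' := hinj (by rw [← hσ₀, map_zero, h.zero])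
      map_add' := fun x y => hinj (by rw [← hσ₀, map_add, map_add, h.add, hσ₀, hσ₀])
      map_mul' := fun x y => hinj (by rw [← hσ₀, map_mul, h.mul, hσ₀, hσ₀, ← map_mul, mul_comm]) }
  have hσ : ∀ c, dag (scalar (Fin n) c) = scalar (Fin n) (σ c) := hσ₀
  have hσσ : ∀ c, σ (σ c) = c := fun c => hinj (by rw [← hσ, ← hσ, h.inv])
  have hmap : ∀ x y : Matrix (Fin n) (Fin n) F, ((x * y).map σ)ᵀ = (y.map σ)ᵀ * (x.map σ)ᵀ := by
    intro x y
    rw [Matrix.map_mul, transpose_mul]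
  have hmm : ∀ x : Matrix (Fin n) (Fin n) F, (((x.map σ)ᵀ).map σ)ᵀ = x := by
    intro x; ext i j; simp [hσσ]
  have hsc : ∀ c, ((scalar (Fin n) c).map σ)ᵀ = scalar (Fin n) (σ c) := by
    intro c
    ext i j
    by_cases hij : i = j
    · subst hij; simp
    · simp [hij, Ne.symm hij]
  let φ : Matrix (Fin n) (Fin n) F ≃ₐ[F] Matrix (Fin n) (Fin n) F :=
    AlgEquiv.ofBijective
      { toFun := fun x => dag ((x.map σ)ᵀ)
        map_one' := by
          have := hsc 1
          rw [map_one, map_one, map_one] at this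
          change dag (((1 : Matrix (Fin n) (Fin n) F).map σ)ᵀ) = 1
          rw [this, h.one]
        map_zero' := by
          have := hsc 0
          rw [map_zero, map_zero, map_zero] at this
          change dag (((0 : Matrix (Fin n) (Fin n) F).map σ)ᵀ) = 0
          rw [this, h.zero]
        map_add' := fun x y => by
          rw [Matrix.map_add σ (map_add σ), transpose_add, h.add]
        map_mul' := fun x y => by rw [hmap, h.mul]
        commutes' := fun c => by
          have : algebraMap F (Matrix (Fin n) (Fin n) F) c = scalar (Fin n) c := rfl
          change dag (((algebraMap F (Matrix (Fin n) (Fin n) F) c).map σ)ᵀ) = _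
          rw [this, hsc, hσ, hσσ] }
      (by
        constructor
        · intro x y hxy
          have h1 := congrArg dag hxy
          change dag (dag _) = dag (dag _) at h1
          rw [h.inv, h.inv] at h1
          rw [← hmm x, h1, hmm y]
        · intro x
          refine ⟨((dag x).map σ)ᵀ, ?_⟩
          change dag ((((((dag x).map σ)ᵀ)).map σ)ᵀ) = x
          rw [hmm, h.inv])
  obtain ⟨T, hT, hTx⟩ := exists_conj_of_algEquiv φ
  obtain ⟨U, rfl⟩ := hT
  refine ⟨σ, (U⁻¹).1, hσσ, hσ, Units.isUnit _, fun x => ?_⟩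
  have h1 := hTx ((x.map σ)ᵀ)
  have h2 : φ ((x.map σ)ᵀ) = dag x := by
    change dag ((((x.map σ)ᵀ).map σ)ᵀ) = _
    rw [hmm]
  rw [h2] at h1
  calc (U⁻¹).1 * dag x = (U⁻¹).1 * (dag x * U.1) * (U⁻¹).1 := by
        simp [mul_assoc]
    _ = _ := by rw [h1]; simp [← mul_assoc]

/-- Over a finite field of odd characteristic a symmetric unit `q` has the form `s† s`, provided that
`det q` is a square when `†` is of the first kind. If `†` is adjunction for `H`, then `s† s = q` says
that `s` carries the form `H` to the form `H q`. After rescaling by a scalar `l` (Hilbert 90), `H` is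
hermitian, or skew with trivial `star`, and the classification of forms applies. -/
theorem exists_dag_mul_self [Finite F] (h2 : (2 : F) ≠ 0)
    {dag : Matrix (Fin n) (Fin n) F → Matrix (Fin n) (Fin n) F} (h : IsInv dag)
    {q : Matrix (Fin n) (Fin n) F} (hq : IsUnit q) (hqd : dag q = q)
    (hsq : (∀ c : F, dag (scalar (Fin n) c) = scalar (Fin n) c) → IsSquare q.det) :
    ∃ s, dag s * s = q := by
  rcases Nat.eq_zero_or_pos n with rfl | hn
  · exact ⟨0, Subsingleton.elim _ _⟩
  have : Nonempty (Fin n) := ⟨⟨0, hn⟩⟩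
  obtain ⟨σ, H, hσσ, hσ, hH, hHx⟩ := h.exists_conj hn
  let : StarRing F :=
    { star := σ
      star_involutive := hσσ
      star_mul := fun x y => by rw [map_mul, mul_comm]
      star_add := fun x y => map_add σ x y }
  have hst : ∀ z : F, star z = σ z := fun _ => rfl
  have hHx : ∀ x, H * dag x = xᴴ * H := hHx
  -- a scalar `e` with `Hᴴ = e H`
  obtain ⟨e, he⟩ : ∃ e : F, Hᴴ = e • H := by
    obtain ⟨U, rfl⟩ := hH
    have hc : ∀ x, (U⁻¹.1 * U.1ᴴ) * x = x * (U⁻¹.1 * U.1ᴴ) := by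
      intro x
      have h1 := hHx (dag x)
      rw [h.inv] at h1
      have h3 := congrArg conjTranspose (hHx x)
      rw [conjTranspose_mul, conjTranspose_mul, conjTranspose_conjTranspose] at h3
      -- `h1 : U x = (dag x)ᴴ U`, `h3 : (dag x)ᴴ Uᴴ = Uᴴ x`
      have h4 : (dag x)ᴴ = U.1 * x * U⁻¹.1 := by
        rw [h1, mul_assoc, Units.mul_inv, mul_one]
      rw [h4] at h3
      calc (U⁻¹.1 * U.1ᴴ) * x = U⁻¹.1 * (U.1ᴴ * x) := mul_assoc _ _ _
        _ = _ := by rw [← h3]; simp only [← mul_assoc, Units.inv_mul, one_mul]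
    obtain ⟨e, he⟩ : U⁻¹.1 * U.1ᴴ ∈ Set.range (scalar (Fin n)) := by
      rw [mem_range_scalar_iff_commute_single']
      intro i j
      exact (hc _).symm
    refine ⟨e, ?_⟩
    calc U.1ᴴ = U.1 * (U⁻¹.1 * U.1ᴴ) := by rw [← mul_assoc, Units.mul_inv, one_mul]
      _ = _ := by rw [← he, ← (scalar_commute e (Commute.all e) U.1).eq, scalar_apply,
                      ← smul_eq_diagonal_mul]
  have hee : e * star e = 1 := by
    have h1 := congrArg conjTranspose he
    rw [conjTranspose_conjTranspose, conjTranspose_smul, he, smul_smul] at h1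
    have h3 : (1 - star e * e) • H = 0 := by rw [sub_smul, one_smul, ← h1, sub_self]
    rcases smul_eq_zero.mp h3 with h4 | h4
    · linear_combination -h4
    · exact absurd h4 hH.ne_zero
  have hQ : ∀ {l e' : F}, (l • H)ᴴ = e' • (l • H) → (l • H * q)ᴴ = e' • (l • H * q) := by
    intro l e' hl
    have := hHx q
    rw [hqd] at this
    rw [conjTranspose_mul, hl, Matrix.mul_smul, Matrix.mul_smul, ← this, Matrix.smul_mul]
  have hlu : ∀ {l : F}, l ≠ 0 → IsUnit (l • H) := by
    intro l hl
    rw [isUnit_iff_isUnit_det] at hH ⊢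
    rw [det_smul]
    exact (IsUnit.mk0 _ (pow_ne_zero _ hl)).mul hH
  have fin : ∀ {l : F}, l ≠ 0 → Cong (l • H) (l • H * q) → ∃ s, dag s * s = q := by
    rintro l hl ⟨S, -, hS⟩
    refine ⟨S, (hlu hl).mul_left_cancel ?_⟩
    rw [← hS, ← mul_assoc, Matrix.smul_mul, hHx, ← Matrix.mul_smul]
  have hdet : ∀ {l : F}, (∀ z : F, star z = z) → IsSquare ((l • H).det * (l • H * q).det) := by
    intro l hz
    obtain ⟨y, hy⟩ := hsq (fun c => by rw [hσ, ← hst, hz])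
    refine ⟨(l • H).det * y, ?_⟩
    rw [det_mul, hy]; ring
  by_cases hz : ∀ z : F, star z = z
  · rw [hz] at hee
    rcases mul_self_eq_one_iff.mp hee with rfl | rfl
    · refine fin one_ne_zero (cong_of_hermitian h2 n _ _ ?_ ?_ (hlu one_ne_zero)
        ((hlu one_ne_zero).mul hq) hdet)
      · simpa using he
      · simpa using hQ (l := 1) (e' := 1) (by simpa using he)
    · refine fin one_ne_zero (cong_of_skew h2 hz n _ _ ?_ ?_ (hlu one_ne_zero)
        ((hlu one_ne_zero).mul hq))
      · simpa using he
      · simpa using hQ (l := 1) (e' := -1) (by simpa using he)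
  -- Hilbert 90: `l = x + star x * e` for some `x`, since `star` is nontrivial
  · obtain ⟨l, hl, hle⟩ : ∃ l : F, l ≠ 0 ∧ star l * e = l := by
      have hx : ∀ x : F, star (x + star x * e) * e = x + star x * e := by
        intro x
        rw [star_add, star_mul', star_star]
        linear_combination x * hee
      by_contra! hcon
      have h0 : ∀ x : F, x + star x * e = 0 := fun x => by
        by_contra hne
        exact hcon _ hne (hx x)
      have h1 := h0 1
      rw [star_one, one_mul] at h1
      apply hz
      intro z
      linear_combination (h1 * star z) - h0 z
    have hlh : (l • H)ᴴ = (1 : F) • (l • H) := by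
      rw [conjTranspose_smul, he, smul_smul, hle, one_smul]
    have hq' := hQ hlh
    rw [one_smul] at hlh hq'
    exact fin hl (cong_of_hermitian h2 n _ _ hlh hq' (hlu hl) ((hlu hl).mul hq) hdet)

end Involution
end UnitForms

/-! ### Unramified extensions of `ℚ_p`, and square roots of elements congruent to `1` -/

namespace UnitForms
section Unramified
set_option linter.unusedSectionVars false

variable {p : ℕ} [Fact p.Prime] {K : Type*} [Field K] [Algebra ℚ_[p] K]
  [FiniteDimensional ℚ_[p] K] [Algebra ℤ_[p] K] [IsScalarTower ℤ_[p] ℚ_[p] K]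

theorem padicInt_exists_eq {c : ℚ_[p]} (hc : ‖c‖ ≤ 1) : ∃ z : ℤ_[p], algebraMap ℤ_[p] ℚ_[p] z = c :=
  ⟨⟨c, hc⟩, rfl⟩

/-- The ring of integers is the unit ball: the minimal polynomial of an element over `ℚ_p` has
integral coefficients exactly when the spectral norm is at most one. -/
theorem isIntegral_iff_spectralNorm_le_one (x : K) :
    IsIntegral ℤ_[p] x ↔ spectralNorm ℚ_[p] K x ≤ 1 := by
  have hx : IsIntegral ℚ_[p] x := Algebra.IsIntegral.isIntegral x
  constructor
  · intro h
    rw [spectralNorm, spectralValue_le_one_iff (minpoly.monic hx),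
      minpoly.isIntegrallyClosed_eq_field_fractions' ℚ_[p] h]
    intro n
    rw [Polynomial.coeff_map]
    exact ((minpoly ℤ_[p] x).coeff n).2
  · intro h
    rw [spectralNorm, spectralValue_le_one_iff (minpoly.monic hx)] at h
    have hl : minpoly ℚ_[p] x ∈ Polynomial.lifts (algebraMap ℤ_[p] ℚ_[p]) := by
      rw [Polynomial.lifts_iff_coeff_lifts]
      exact fun n => padicInt_exists_eq (h n)
    obtain ⟨f, hf, -, hfm⟩ := Polynomial.lifts_and_natDegree_eq_and_monic hl (minpoly.monic hx)
    refine ⟨f, hfm, ?_⟩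
    have := minpoly.aeval ℚ_[p] x
    rw [← hf, Polynomial.aeval_map_algebraMap] at this
    exact this

theorem padic_coeff_of_norm_lt_one {c : ℚ_[p]} (hc : ‖c‖ < 1) :
    ∃ z : ℤ_[p], algebraMap ℤ_[p] ℚ_[p] (p * z) = c := by
  let w : ℤ_[p] := ⟨c, hc.le⟩
  have : (p : ℤ_[p]) ∣ w := by
    rw [← PadicInt.norm_lt_one_iff_dvd]; exact hc
  obtain ⟨z, hz⟩ := this
  exact ⟨z, by rw [← hz]; rfl⟩

/-- An element of norm less than one is nilpotent modulo `p`, already in any `ℤ_p`-subalgebra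
containing it: the non-leading coefficients of its minimal polynomial are divisible by `p`. -/
theorem exists_pow_eq_p_mul (A : Subalgebra ℤ_[p] K) {y : K} (hy : y ∈ A)
    (hN : spectralNorm ℚ_[p] K y < 1) : ∃ d : ℕ, ∃ a ∈ A, y ^ d = p * a := by
  have hx : IsIntegral ℚ_[p] y := Algebra.IsIntegral.isIntegral y
  set f := minpoly ℚ_[p] y with hf
  have hm : f.Monic := minpoly.monic hx
  have hc : ∀ i, ∃ z : ℤ_[p], i < f.natDegree → algebraMap ℤ_[p] ℚ_[p] (p * z) = f.coeff i := by
    intro i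
    by_cases hi : i < f.natDegree
    · have : spectralValueTerms f i < 1 :=
        (le_ciSup (spectralValueTerms_bddAbove f) i).trans_lt hN
      rw [spectralValueTerms_of_lt_natDegree _ hi] at this
      have hlt : ‖f.coeff i‖ < 1 := by
        by_contra! hge
        have hpos : (0 : ℝ) ≤ 1 / (f.natDegree - i : ℝ) := by
          have : (i : ℝ) < f.natDegree := by exact_mod_cast hi
          exact div_nonneg zero_le_one (by linarith)
        exact absurd this (not_lt.mpr (Real.one_le_rpow hge hpos))
      obtain ⟨z, hz⟩ := padic_coeff_of_norm_lt_one hlt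
      exact ⟨z, fun _ => hz⟩
    · exact ⟨0, fun h => absurd h hi⟩
  choose z hz using hc
  refine ⟨f.natDegree, -∑ i ∈ Finset.range f.natDegree, algebraMap ℤ_[p] K (z i) * y ^ i, ?_, ?_⟩
  · exact neg_mem (sum_mem fun i _ => mul_mem (A.algebraMap_mem _) (pow_mem hy _))
  · have h0 : Polynomial.aeval y f = 0 := minpoly.aeval _ _
    rw [Polynomial.aeval_eq_sum_range, Finset.sum_range_succ, hm.coeff_natDegree, one_smul] at h0
    rw [eq_neg_of_add_eq_zero_right h0, mul_neg, Finset.mul_sum]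
    congr 1
    refine Finset.sum_congr rfl fun i hi => ?_
    rw [← hz i (Finset.mem_range.mp hi), Algebra.smul_def, ← IsScalarTower.algebraMap_apply,
      map_mul, map_natCast, mul_assoc]

/-- For `ζ` of order prime to `p`, a power of Frobenius fixes `ℤ_p[ζ]` modulo `p`. -/
theorem exists_frobenius_pow {m : ℕ} {ζ : K} (hm : 0 < m) (hpm : ¬ p ∣ m)
    (hζ : ζ ^ m = 1) : ∃ Q : ℕ, 2 ≤ Q ∧ ∀ y ∈ Algebra.adjoin ℤ_[p] {ζ},
      ∃ a ∈ Algebra.adjoin ℤ_[p] {ζ}, y ^ Q = y + p * a := by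
  have hp : p.Prime := Fact.out
  have hco : Nat.Coprime p m := (Nat.Prime.coprime_iff_not_dvd hp).mpr hpm
  refine ⟨p ^ m.totient, ?_, ?_⟩
  · exact hp.two_le.trans (Nat.le_self_pow (Nat.totient_pos.mpr hm).ne' p)
  have hmod := Nat.ModEq.pow_totient hco
  have hζQ : ζ ^ (p ^ m.totient) = ζ := by
    have h1 : 1 ≤ p ^ m.totient := Nat.one_le_pow _ _ hp.pos
    obtain ⟨k, hk⟩ := (Nat.modEq_iff_dvd' h1).mp hmod.symm
    have : p ^ m.totient = m * k + 1 := by omega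
    rw [this, pow_succ, pow_mul, hζ, one_pow, one_mul]
  intro y hy
  induction hy using Algebra.adjoin_induction with
  | mem x hx =>
    rw [Set.mem_singleton_iff] at hx
    subst hx
    exact ⟨0, zero_mem _, by rw [hζQ]; simp⟩
  | algebraMap z =>
    have : (p : ℤ_[p]) ∣ z ^ (p ^ m.totient) - z := by
      rw [← Ideal.mem_span_singleton, ← PadicInt.maximalIdeal_eq_span_p, ← PadicInt.ker_toZMod,
        RingHom.mem_ker, map_sub, map_pow, ZMod.pow_card_pow, sub_self]
    obtain ⟨w, hw⟩ := this
    refine ⟨algebraMap _ _ w, Subalgebra.algebraMap_mem _ _, ?_⟩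
    rw [← map_pow, eq_add_of_sub_eq hw, map_add, map_mul, map_natCast, add_comm]
  | add x y hx hy ihx ihy =>
    obtain ⟨a, ha, hxa⟩ := ihx
    obtain ⟨b, hb, hyb⟩ := ihy
    obtain ⟨r, hr⟩ := exists_add_pow_prime_pow_eq hp (⟨x, hx⟩ : Algebra.adjoin ℤ_[p] {ζ})
      ⟨y, hy⟩ m.totient
    have hr' := congrArg (fun t : Algebra.adjoin ℤ_[p] {ζ} => (t : K)) hr
    push_cast at hr'
    refine ⟨a + b + x * y * r, add_mem (add_mem ha hb) (mul_mem (mul_mem hx hy) r.2), ?_⟩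
    rw [hr', hxa, hyb]
    ring
  | mul x y hx hy ihx ihy =>
    obtain ⟨a, ha, hxa⟩ := ihx
    obtain ⟨b, hb, hyb⟩ := ihy
    have hpA : (p : K) ∈ Algebra.adjoin ℤ_[p] {ζ} := natCast_mem _ _
    refine ⟨x * b + a * y + p * a * b, add_mem (add_mem (mul_mem hx hb) (mul_mem ha hy))
      (mul_mem (mul_mem hpA ha) hb), ?_⟩
    rw [mul_pow, hxa, hyb]
    ring

/-- In an unramified extension `p` is a uniformizer. Let `A = ℤ_p[ζ]`. A power of Frobenius is the
identity on `A / p`, which is therefore reduced, so elements of `A` of norm less than one lie in `p A`.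
Since `A` spans `K`, this forces every integral element to lie in `A`, and the same property then
gives the divisibility. -/
theorem exists_eq_p_mul_of_not_isIntegral_inv
    (hur : ∃ (m : ℕ) (x : K), 0 < m ∧ ¬ p ∣ m ∧ IsPrimitiveRoot x m ∧
      Algebra.adjoin ℚ_[p] {x} = ⊤)
    {y : K} (hy : IsIntegral ℤ_[p] y) (hy' : ¬ IsIntegral ℤ_[p] y⁻¹) :
    ∃ a, IsIntegral ℤ_[p] a ∧ y = p * a := by
  have hp : p.Prime := Fact.out
  have hpK : (p : K) ≠ 0 := by
    have : CharZero K := charZero_of_injective_algebraMap (algebraMap ℚ_[p] K).injective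
    exact_mod_cast hp.ne_zero
  obtain ⟨m, ζ, hm, hpm, hζ, htop⟩ := hur
  obtain ⟨Q, hQ2, hQ⟩ := exists_frobenius_pow hm hpm hζ.pow_eq_one
  set A := Algebra.adjoin ℤ_[p] {ζ} with hA
  have hmul : ∀ x y : K, spectralNorm ℚ_[p] K (x * y) =
      spectralNorm ℚ_[p] K x * spectralNorm ℚ_[p] K y := fun x y =>
    map_mul (spectralMulAlgNorm ℚ_[p] K) x y
  have hNp : spectralNorm ℚ_[p] K (p : K) < 1 := by
    have : (p : K) = algebraMap ℚ_[p] K p := by simp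
    rw [this, spectralNorm_extends]
    exact Padic.norm_p_lt_one
  have hpow : ∀ y ∈ A, ∀ j : ℕ, ∃ a ∈ A, y ^ (Q ^ j) = y + p * a := by
    intro y hy j
    induction j with
    | zero => exact ⟨0, zero_mem _, by simp⟩
    | succ j ih =>
      obtain ⟨a, ha, h1⟩ := ih
      obtain ⟨b, hb, h2⟩ := hQ (y ^ Q ^ j) (pow_mem hy _)
      refine ⟨a + b, add_mem ha hb, ?_⟩
      rw [pow_succ, pow_mul, h2, h1]; ring
  have hpA : (p : K) ∈ A := natCast_mem _ _
  -- the reducedness of `A / p`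
  have S2 : ∀ y ∈ A, spectralNorm ℚ_[p] K y < 1 → ∃ a ∈ A, y = p * a := by
    intro y hy hN
    obtain ⟨d, a, ha, hd⟩ := exists_pow_eq_p_mul A hy hN
    obtain ⟨b, hb, hbQ⟩ := hpow y hy d
    have hle : d ≤ Q ^ d := (Nat.lt_pow_self hQ2).le
    obtain ⟨k, hk⟩ := Nat.exists_eq_add_of_le hle
    refine ⟨a * y ^ k - b, sub_mem (mul_mem ha (pow_mem hy _)) hb, ?_⟩
    rw [hk, pow_add, hd] at hbQ
    linear_combination -hbQ
  -- `A` is `p`-saturated in the ring of integers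
  have S3 : ∀ (k : ℕ) (x : K), IsIntegral ℤ_[p] x → (p : K) ^ k * x ∈ A → x ∈ A := by
    intro k
    induction k with
    | zero => intro x _ h; simpa using h
    | succ k ih =>
      intro x hx h
      apply ih x hx
      have hkx : IsIntegral ℤ_[p] ((p : K) ^ k * x) :=
        ((isIntegral_natCast (R := ℤ_[p]) (a := p)).pow k).mul hx
      rw [isIntegral_iff_spectralNorm_le_one] at hkx
      have hlt : spectralNorm ℚ_[p] K ((p : K) ^ (k + 1) * x) < 1 := by
        rw [pow_succ', mul_assoc, hmul]
        calc _ ≤ spectralNorm ℚ_[p] K (p : K) * 1 :=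
              mul_le_mul_of_nonneg_left hkx (spectralNorm_nonneg _)
          _ < 1 := by simpa using hNp
      obtain ⟨a, ha, hEq⟩ := S2 _ h hlt
      have : (p : K) ^ k * x = a := mul_left_cancel₀ hpK (by rw [← hEq]; ring)
      rwa [this]
  have S4 : ∀ x : K, ∃ k : ℕ, (p : K) ^ k * x ∈ A := by
    intro x
    have hx : x ∈ Algebra.adjoin ℚ_[p] {ζ} := by rw [htop]; trivial
    induction hx using Algebra.adjoin_induction with
    | mem x hx => exact ⟨0, by simpa using Algebra.subset_adjoin hx⟩
    | algebraMap c =>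
      obtain ⟨k, hk⟩ : ∃ k : ℕ, ‖(p : ℚ_[p]) ^ k * c‖ ≤ 1 := by
        by_cases hc : c = 0
        · exact ⟨0, by simp [hc]⟩
        refine ⟨(-c.valuation).toNat, ?_⟩
        rw [norm_mul, Padic.norm_p_pow, Padic.norm_eq_zpow_neg_valuation hc,
          ← zpow_add₀ (by exact_mod_cast hp.ne_zero)]
        exact zpow_le_one_of_nonpos₀ (by exact_mod_cast hp.one_le) (by omega)
      obtain ⟨z, hz⟩ := padicInt_exists_eq hk
      refine ⟨k, ?_⟩
      have : (p : K) ^ k * algebraMap ℚ_[p] K c = algebraMap ℤ_[p] K z := by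
        rw [IsScalarTower.algebraMap_apply ℤ_[p] ℚ_[p] K, hz]; simp
      rw [this]
      exact A.algebraMap_mem z
    | add x y _ _ hx hy =>
      obtain ⟨k, hk⟩ := hx
      obtain ⟨l, hl⟩ := hy
      refine ⟨k + l, ?_⟩
      have : (p : K) ^ (k + l) * (x + y) = p ^ l * (p ^ k * x) + p ^ k * (p ^ l * y) := by ring
      rw [this]
      exact add_mem (mul_mem (pow_mem hpA _) hk) (mul_mem (pow_mem hpA _) hl)
    | mul x y _ _ hx hy =>
      obtain ⟨k, hk⟩ := hx
      obtain ⟨l, hl⟩ := hy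
      refine ⟨k + l, ?_⟩
      have : (p : K) ^ (k + l) * (x * y) = (p ^ k * x) * (p ^ l * y) := by ring
      rw [this]
      exact mul_mem hk hl
  have hyA : y ∈ A := by
    obtain ⟨k, hk⟩ := S4 y
    exact S3 k y hy hk
  have hNy : spectralNorm ℚ_[p] K y < 1 := by
    rw [isIntegral_iff_spectralNorm_le_one, not_le] at hy'
    by_cases hy0 : y = 0
    · rw [hy0, spectralNorm_zero]; exact one_pos
    have h1 := hmul y y⁻¹
    rw [mul_inv_cancel₀ hy0, spectralNorm_one] at h1
    by_contra! hge
    nlinarith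
  obtain ⟨a, ha, hya⟩ := S2 y hyA hNy
  refine ⟨a, ?_, hya⟩
  have hζi : IsIntegral ℤ_[p] ζ := hζ.isIntegral hm |>.tower_top
  have : A ≤ integralClosure ℤ_[p] K :=
    Algebra.adjoin_le (Set.singleton_subset_iff.mpr hζi)
  exact this ha

end Unramified

section Sqrt

variable {p : ℕ} [Fact p.Prime]

/-- A finite `ℤ_p`-algebra is `p`-adically complete, as a quotient of a finite free module. -/
theorem isAdicComplete_of_finite (C : Type*) [CommRing C] [Algebra ℤ_[p] C] [Module.Finite ℤ_[p] C] :
    IsAdicComplete (Ideal.span {(p : C)}) C := by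
  set I := IsLocalRing.maximalIdeal ℤ_[p] with hI
  have hmap : I.map (algebraMap ℤ_[p] C) = Ideal.span {(p : C)} := by
    rw [hI, PadicInt.maximalIdeal_eq_span_p, Ideal.map_span, Set.image_singleton, map_natCast]
  have hH : IsHausdorff I C := inferInstance
  have hP : IsPrecomplete I C := by
    obtain ⟨n, f, hf⟩ := Module.Finite.exists_fin' ℤ_[p] C
    have hfree : IsPrecomplete I (Fin n → ℤ_[p]) := by
      have hR : IsPrecomplete I ℤ_[p] := inferInstance
      rw [← AdicCompletion.of_surjective_iff] at hR ⊢
      intro y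
      choose x hx using fun i => hR (AdicCompletion.piEquivFin I n y i)
      refine ⟨x, (AdicCompletion.piEquivFin I n).injective (funext fun i => ?_)⟩
      rw [← hx i]
      rw [AdicCompletion.piEquivFin_apply]
      rfl
    rw [← AdicCompletion.of_surjective_iff]
    have h1 := AdicCompletion.of_surjective I (Fin n → ℤ_[p])
    have h2 := AdicCompletion.map_surjective I hf
    intro x
    obtain ⟨y, rfl⟩ := h2 x
    obtain ⟨z, rfl⟩ := h1 y
    exact ⟨f z, (AdicCompletion.map_of ..).symm⟩
  rw [← hmap]
  have a1 : IsHausdorff (I.map (algebraMap ℤ_[p] C)) C := IsHausdorff.map_algebraMap_iff.mpr hH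
  have a2 : IsPrecomplete (I.map (algebraMap ℤ_[p] C)) C := IsPrecomplete.map_algebraMap_iff.mpr hP
  exact { a1, a2 with }

/-- Hensel's lemma for `X² - (1 + p c)` at the approximate root `1`. -/
theorem exists_sqrt (hodd : p ≠ 2) (C : Type*) [CommRing C] [Algebra ℤ_[p] C]
    [Module.Finite ℤ_[p] C] (c : C) : ∃ t : C, t * t = 1 + p * c := by
  have := isAdicComplete_of_finite (p := p) C
  obtain ⟨t, ht, -⟩ := HenselianRing.is_henselian (I := Ideal.span {(p : C)})
    (Polynomial.X ^ 2 - Polynomial.C (1 + p * c)) (Polynomial.monic_X_pow_sub_C _ two_ne_zero) 1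
    (by
      simp only [Polynomial.eval_sub, Polynomial.eval_pow, Polynomial.eval_X, Polynomial.eval_C]
      rw [Ideal.mem_span_singleton]
      exact ⟨-c, by ring⟩)
    (by
      apply IsUnit.map
      have h2 : IsUnit (2 : ℤ_[p]) := by
        rw [PadicInt.isUnit_iff]
        have : ¬ ‖((2 : ℤ) : ℤ_[p])‖ < 1 := by
          rw [PadicInt.norm_int_lt_one_iff_dvd]
          intro h
          have h' : p ∣ 2 := by exact_mod_cast h
          exact hodd ((Nat.prime_dvd_prime_iff_eq Fact.out Nat.prime_two).mp h')
        exact le_antisymm (PadicInt.norm_le_one _) (by simpa using this)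
      have h3 := h2.map (algebraMap ℤ_[p] C)
      rw [map_ofNat] at h3
      simpa [one_add_one_eq_two] using h3)
  refine ⟨t, ?_⟩
  have := ht.eq_zero
  simp at this
  linear_combination this

end Sqrt
end UnitForms

/-! ### The ring of integers of an unramified extension -/

namespace UnitForms
universe u
section IntegerRing
set_option linter.unusedSectionVars false

variable {p : ℕ} [Fact p.Prime] {K : Type u} [Field K] [Algebra ℚ_[p] K]
  [FiniteDimensional ℚ_[p] K] [Algebra ℤ_[p] K] [IsScalarTower ℤ_[p] ℚ_[p] K]

theorem spectralNorm_mul' (x y : K) : spectralNorm ℚ_[p] K (x * y) =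
    spectralNorm ℚ_[p] K x * spectralNorm ℚ_[p] K y :=
  map_mul (spectralMulAlgNorm ℚ_[p] K) x y

theorem spectralNorm_pow' (x : K) (n : ℕ) : spectralNorm ℚ_[p] K (x ^ n) =
    spectralNorm ℚ_[p] K x ^ n :=
  map_pow (spectralMulAlgNorm ℚ_[p] K) x n

theorem spectralNorm_padic (c : ℚ_[p]) : spectralNorm ℚ_[p] K (algebraMap ℚ_[p] K c) = ‖c‖ :=
  spectralNorm_extends c

theorem natCast_p_ne_zero : (p : K) ≠ 0 := by
  have : CharZero K := charZero_of_injective_algebraMap (algebraMap ℚ_[p] K).injective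
  exact_mod_cast (Fact.out : p.Prime).ne_zero

theorem spectralNorm_p : spectralNorm ℚ_[p] K (p : K) = (p : ℝ)⁻¹ := by
  have : (p : K) = algebraMap ℚ_[p] K p := by simp
  rw [this, spectralNorm_padic, Padic.norm_p]

theorem not_isIntegral_p_inv : ¬ IsIntegral ℤ_[p] ((p : K)⁻¹) := by
  rw [isIntegral_iff_spectralNorm_le_one]
  have h1 := spectralNorm_mul' (p := p) (p : K) (p : K)⁻¹
  rw [mul_inv_cancel₀ (natCast_p_ne_zero (p := p)), spectralNorm_one, spectralNorm_p] at h1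
  have hp : (1 : ℝ) < p := by exact_mod_cast (Fact.out : p.Prime).one_lt
  have : (p : ℝ) * (p : ℝ)⁻¹ = 1 := mul_inv_cancel₀ (by positivity)
  have hpos : 0 < (p : ℝ)⁻¹ := by positivity
  intro hle
  nlinarith

/-- The defining property of an unramified extension in the form used below: an integral
element which is not a unit is divisible by `p`. -/
def PUniformizes (p : ℕ) [Fact p.Prime] (K : Type*) [Field K] [Algebra ℤ_[p] K] : Prop :=
  ∀ y : K, IsIntegral ℤ_[p] y → ¬ IsIntegral ℤ_[p] y⁻¹ → ∃ a, IsIntegral ℤ_[p] a ∧ y = p * a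

theorem isUnit_iff_isIntegral_inv (y : integralClosure ℤ_[p] K) (hy : y ≠ 0) :
    IsUnit y ↔ IsIntegral ℤ_[p] (y : K)⁻¹ := by
  have hy0 : (y : K) ≠ 0 := by exact_mod_cast hy
  constructor
  · rintro ⟨u, rfl⟩
    have : ((u.1 : K))⁻¹ = ((u⁻¹).1 : K) := by
      apply inv_eq_of_mul_eq_one_right
      have h := congrArg (fun t : integralClosure ℤ_[p] K => (t : K)) u.mul_inv
      exact h
    rw [this]
    exact (u⁻¹).1.2
  · intro h
    refine IsUnit.of_mul_eq_one (⟨(y : K)⁻¹, h⟩ : integralClosure ℤ_[p] K) ?_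
    ext
    simpa using mul_inv_cancel₀ hy0

theorem not_isUnit_iff (hK : PUniformizes p K) (y : integralClosure ℤ_[p] K) :
    ¬ IsUnit y ↔ ∃ a, y = p * a := by
  constructor
  · intro h
    by_cases hy : y = 0
    · exact ⟨0, by simp [hy]⟩
    rw [isUnit_iff_isIntegral_inv y hy] at h
    obtain ⟨a, ha, hya⟩ := hK y y.2 h
    exact ⟨⟨a, ha⟩, by ext; simpa using hya⟩
  · rintro ⟨a, rfl⟩ h
    have h1 := isUnit_of_mul_isUnit_left h
    have hne : (p : integralClosure ℤ_[p] K) ≠ 0 := by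
      intro h0
      have := congrArg (fun t : integralClosure ℤ_[p] K => (t : K)) h0
      exact natCast_p_ne_zero (p := p) (K := K) (by simpa using this)
    rw [isUnit_iff_isIntegral_inv _ hne] at h1
    exact not_isIntegral_p_inv (p := p) (K := K) (by simpa using h1)

theorem isLocalRing_integralClosure (hK : PUniformizes p K) :
    IsLocalRing (integralClosure ℤ_[p] K) := by
  refine IsLocalRing.of_nonunits_add fun a b ha hb => ?_
  rw [mem_nonunits_iff, not_isUnit_iff hK] at *
  obtain ⟨x, rfl⟩ := ha
  obtain ⟨y, rfl⟩ := hb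
  exact ⟨x + y, by ring⟩

theorem finite_integralClosure : Module.Finite ℤ_[p] (integralClosure ℤ_[p] K) :=
  IsIntegralClosure.finite ℤ_[p] ℚ_[p] K (integralClosure ℤ_[p] K)

theorem isFractionRing_integralClosure : IsFractionRing (integralClosure ℤ_[p] K) K :=
  integralClosure.isFractionRing_of_finite_extension ℚ_[p] K

theorem maximalIdeal_integralClosure (hK : PUniformizes p K)
    [IsLocalRing (integralClosure ℤ_[p] K)] :
    IsLocalRing.maximalIdeal (integralClosure ℤ_[p] K) = Ideal.span {(p : integralClosure ℤ_[p] K)} := by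
  ext y
  rw [IsLocalRing.mem_maximalIdeal, mem_nonunits_iff, not_isUnit_iff hK, Ideal.mem_span_singleton]
  rfl

theorem isPrincipalIdealRing_integralClosure (hK : PUniformizes p K) :
    IsPrincipalIdealRing (integralClosure ℤ_[p] K) := by
  have := isLocalRing_integralClosure hK
  have := finite_integralClosure (p := p) (K := K)
  have : IsNoetherianRing (integralClosure ℤ_[p] K) := IsNoetherianRing.of_finite ℤ_[p] _
  refine ((tfae_of_isNoetherianRing_of_isLocalRing_of_isDomain
    (integralClosure ℤ_[p] K)).out 4 0).mp ?_
  rw [maximalIdeal_integralClosure hK]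
  exact ⟨⟨_, rfl⟩⟩

/-- Reduction modulo `p`: a surjection from the ring of integers onto a finite field of odd
characteristic, with kernel generated by `p`, which detects units. -/
theorem exists_residue (hodd : p ≠ 2) (hK : PUniformizes p K) :
    ∃ (k : Type u) (_ : Field k) (_ : Finite k) (ρ : integralClosure ℤ_[p] K →+* k),
      Function.Surjective ρ ∧ (2 : k) ≠ 0 ∧ (∀ x, ρ x = 0 ↔ ∃ a, x = p * a) ∧
      ∀ x, ρ x ≠ 0 → IsUnit x := by
  have := isLocalRing_integralClosure hK
  have := finite_integralClosure (p := p) (K := K)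
  have hfin : Finite (IsLocalRing.ResidueField (integralClosure ℤ_[p] K)) := by
    obtain ⟨n, f, hf⟩ := Module.Finite.exists_fin' ℤ_[p] (integralClosure ℤ_[p] K)
    refine Finite.of_surjective (fun v : Fin n → ZMod p =>
      IsLocalRing.residue (integralClosure ℤ_[p] K) (f fun i => ((v i).val : ℤ_[p]))) fun y => ?_
    obtain ⟨x, rfl⟩ := IsLocalRing.residue_surjective y
    obtain ⟨v, rfl⟩ := hf x
    have hw : ∀ i, ∃ w : ℤ_[p], v i = ((PadicInt.toZMod (v i)).val : ℤ_[p]) + p * w := by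
      intro i
      have : v i - ((PadicInt.toZMod (v i)).val : ℤ_[p]) ∈ RingHom.ker (PadicInt.toZMod (p := p)) := by
        rw [RingHom.mem_ker, map_sub, map_natCast, ZMod.natCast_zmod_val, sub_self]
      rw [PadicInt.ker_toZMod, PadicInt.maximalIdeal_eq_span_p, Ideal.mem_span_singleton] at this
      obtain ⟨w, hw⟩ := this
      exact ⟨w, by rw [← hw]; ring⟩
    choose w hw using hw
    refine ⟨fun i => PadicInt.toZMod (v i), ?_⟩
    have hv : v = (fun i => ((PadicInt.toZMod (v i)).val : ℤ_[p])) + (p : ℤ_[p]) • w := funext hw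
    have hp0 : IsLocalRing.residue (integralClosure ℤ_[p] K) (p : integralClosure ℤ_[p] K) = 0 := by
      rw [IsLocalRing.residue_eq_zero_iff, IsLocalRing.mem_maximalIdeal, mem_nonunits_iff,
        not_isUnit_iff hK]
      exact ⟨1, by simp⟩
    conv_rhs => rw [hv]
    rw [map_add, map_smul, map_add, Algebra.smul_def, map_mul, map_natCast, hp0, zero_mul, add_zero]
  refine ⟨IsLocalRing.ResidueField ↥(integralClosure ℤ_[p] K), inferInstance, hfin,
    IsLocalRing.residue _, IsLocalRing.residue_surjective, ?_, ?_, ?_⟩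
  · have : IsUnit (2 : integralClosure ℤ_[p] K) := by
      by_contra h
      obtain ⟨b, hb⟩ := (not_isUnit_iff hK _).mp h
      obtain ⟨c, hc⟩ := (Fact.out : p.Prime).odd_of_ne_two hodd
      refine (not_isUnit_iff hK (p : integralClosure ℤ_[p] K)).mpr ⟨1, by simp⟩
        (IsUnit.of_mul_eq_one (1 - b * c) ?_)
      have hc' := congrArg (Nat.cast (R := integralClosure ℤ_[p] K)) hc
      push_cast at hc'
      linear_combination hc' + c * hb
    have h := this.map (IsLocalRing.residue (integralClosure ℤ_[p] K))
    rw [map_ofNat] at h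
    exact h.ne_zero
  · intro x
    rw [IsLocalRing.residue_eq_zero_iff, IsLocalRing.mem_maximalIdeal, mem_nonunits_iff,
      not_isUnit_iff hK]
  · intro x hx
    by_contra h
    exact hx ((IsLocalRing.residue_eq_zero_iff _).mpr h)

/-- Factorization of a nonzero element of `K` as a power of `p` times a unit. -/
theorem exists_eq_p_zpow_mul (hK : PUniformizes p K) {x : K} (hx : x ≠ 0) :
    ∃ (j : ℤ) (u : (integralClosure ℤ_[p] K)ˣ), x = (p : K) ^ j * (u : integralClosure ℤ_[p] K) := by
  have := isLocalRing_integralClosure hK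
  have := isPrincipalIdealRing_integralClosure hK
  have := isFractionRing_integralClosure (p := p) (K := K)
  have hnf : ¬ IsField (integralClosure ℤ_[p] K) := by
    intro h
    have hp := (not_isUnit_iff hK (p : integralClosure ℤ_[p] K)).mpr ⟨1, by simp⟩
    have hp0 : (p : integralClosure ℤ_[p] K) ≠ 0 := fun h0 => by
      have := congrArg (fun t : integralClosure ℤ_[p] K => (t : K)) h0
      exact natCast_p_ne_zero (p := p) (K := K) (by simpa using this)
    obtain ⟨c, hc⟩ := h.mul_inv_cancel hp0
    exact hp (IsUnit.of_mul_eq_one _ hc)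
  have : IsDiscreteValuationRing (integralClosure ℤ_[p] K) :=
    { not_a_field' := fun h => hnf (IsLocalRing.isField_iff_maximalIdeal_eq.mpr h) }
  have hirr : Irreducible (p : integralClosure ℤ_[p] K) :=
    (IsDiscreteValuationRing.irreducible_iff_uniformizer _).mpr (maximalIdeal_integralClosure hK)
  obtain ⟨⟨a, b⟩, hab⟩ := IsLocalization.surj (nonZeroDivisors (integralClosure ℤ_[p] K)) x
  have hab : x * ((b : integralClosure ℤ_[p] K) : K) = (a : K) := hab
  have hb0 : (b : integralClosure ℤ_[p] K) ≠ 0 := nonZeroDivisors.ne_zero b.2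
  have hbK : ((b : integralClosure ℤ_[p] K) : K) ≠ 0 := by exact_mod_cast hb0
  have ha0 : a ≠ 0 := by
    rintro rfl
    exact mul_ne_zero hx hbK hab
  obtain ⟨i, u, hu⟩ := IsDiscreteValuationRing.eq_unit_mul_pow_irreducible ha0 hirr
  obtain ⟨j, w, hw⟩ := IsDiscreteValuationRing.eq_unit_mul_pow_irreducible hb0 hirr
  have hpK := natCast_p_ne_zero (p := p) (K := K)
  have hwi : ((w : integralClosure ℤ_[p] K) : K) * ((w⁻¹).1 : K) = 1 := by
    have h := congrArg (fun t : integralClosure ℤ_[p] K => (t : K)) w.mul_inv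
    exact h
  refine ⟨(i : ℤ) - j, u * w⁻¹, ?_⟩
  apply mul_right_cancel₀ hbK
  rw [hab, hu, hw, zpow_sub₀ hpK]
  push_cast
  rw [zpow_natCast, zpow_natCast]
  field_simp
  linear_combination -hwi

/-- The value group of an unramified extension is that of `ℚ_p`. -/
theorem exists_spectralNorm_eq (hK : PUniformizes p K) {x : K} (hx : x ≠ 0) :
    ∃ j : ℤ, spectralNorm ℚ_[p] K x = (p : ℝ) ^ (-j) := by
  obtain ⟨j, u, hu⟩ := exists_eq_p_zpow_mul hK hx
  refine ⟨j, ?_⟩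
  have h1 := (isIntegral_iff_spectralNorm_le_one (p := p) _).mp u.1.2
  have h2 := (isIntegral_iff_spectralNorm_le_one (p := p) _).mp (u⁻¹).1.2
  have h3 : ((u : integralClosure ℤ_[p] K) : K) * ((u⁻¹).1 : K) = 1 :=
    congrArg (fun t : integralClosure ℤ_[p] K => (t : K)) u.mul_inv
  have h4 := spectralNorm_mul' (p := p) ((u : integralClosure ℤ_[p] K) : K) ((u⁻¹).1 : K)
  rw [h3, spectralNorm_one] at h4
  have h5 := spectralNorm_nonneg (K := ℚ_[p]) ((u⁻¹).1 : K)
  have h6 := spectralNorm_nonneg (K := ℚ_[p]) ((u : integralClosure ℤ_[p] K) : K)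
  have hNu : spectralNorm ℚ_[p] K ((u : integralClosure ℤ_[p] K) : K) = 1 := by
    refine le_antisymm h1 ?_
    nlinarith
  have hz : spectralNorm ℚ_[p] K ((p : K) ^ j) = (p : ℝ) ^ (-j) := by
    have : (p : K) ^ j = algebraMap ℚ_[p] K ((p : ℚ_[p]) ^ j) := by simp
    rw [this, spectralNorm_padic, Padic.norm_p_zpow]
  rw [hu, spectralNorm_mul', hNu, hz, mul_one]

end IntegerRing
end UnitForms

/-! ### Maximal orders as endomorphism rings of lattices -/

namespace UnitForms
open Matrix
section IntegralModel

variable {p : ℕ} [Fact p.Prime] {K : Type*} [Field K] [Algebra ℚ_[p] K]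
  [FiniteDimensional ℚ_[p] K] [Algebra ℤ_[p] K] [IsScalarTower ℤ_[p] ℚ_[p] K]
  {E : Type*} [Ring E] [Algebra ℚ_[p] E] [Algebra ℤ_[p] E] [IsScalarTower ℤ_[p] ℚ_[p] E]

/-- A maximal order of `M_n(K)` is `M_n(O)` in a suitable basis: the `O`-lattice generated by the
translates `r e_j`, `r ∈ R`, of the standard basis is free and stable under `R`, so `R` is contained in
its endomorphism ring, which is an order. -/
theorem exists_integral_model (hK : PUniformizes p K) {n : ℕ}
    (f₀ : E ≃ₐ[ℚ_[p]] Matrix (Fin n) (Fin n) K)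
    {R : Subalgebra ℤ_[p] E} (hR : IsOrderZp p E R)
    (hRmax : ∀ R' : Subalgebra ℤ_[p] E, IsOrderZp p E R' → R ≤ R' → R' = R) :
    ∃ f : E ≃ₐ[ℚ_[p]] Matrix (Fin n) (Fin n) K,
      ∀ x, x ∈ R ↔ ∀ i j, IsIntegral ℤ_[p] (f x i j) := by
  let O := integralClosure ℤ_[p] K
  have hfinO : Module.Finite ℤ_[p] O := finite_integralClosure
  have := isPrincipalIdealRing_integralClosure hK
  have := isFractionRing_integralClosure (p := p) (K := K)
  let Λ : Submodule O (Fin n → K) :=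
    Submodule.span O {v | ∃ r ∈ R, ∃ j, v = f₀ r *ᵥ Pi.single j 1}
  have hΛstab : ∀ r ∈ R, ∀ v ∈ Λ, f₀ r *ᵥ v ∈ Λ := by
    intro r hr v hv
    induction hv using Submodule.span_induction with
    | mem v hv =>
      obtain ⟨s, hs, j, rfl⟩ := hv
      exact Submodule.subset_span ⟨r * s, mul_mem hr hs, j, by rw [map_mul, mulVec_mulVec]⟩
    | zero => rw [mulVec_zero]; exact zero_mem _
    | add v w _ _ hv hw => rw [mulVec_add]; exact add_mem hv hw
    | smul c v _ hv =>
      have : f₀ r *ᵥ (c • v) = c • (f₀ r *ᵥ v) := mulVec_smul (f₀ r) (c : K) v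
      rw [this]
      exact Λ.smul_mem c hv
  have hsingle : ∀ j, (Pi.single j 1 : Fin n → K) ∈ Λ := fun j =>
    Submodule.subset_span ⟨1, one_mem _, j, by rw [map_one, one_mulVec]⟩
  have hΛfg : Λ.FG := by
    obtain ⟨T, hT⟩ := hR.1
    let Λ' : Submodule O (Fin n → K) :=
      Submodule.span O (Set.image2 (fun t j => f₀ t *ᵥ Pi.single j 1) (T : Set E) Set.univ)
    have hfg' : Λ'.FG := Submodule.fg_span (Set.Finite.image2 _ T.finite_toSet Set.finite_univ)
    have hmem : ∀ r ∈ Submodule.span ℤ_[p] (T : Set E), ∀ j, f₀ r *ᵥ Pi.single j 1 ∈ Λ' := by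
      intro r hr j
      induction hr using Submodule.span_induction with
      | mem t ht => exact Submodule.subset_span ⟨t, ht, j, trivial, rfl⟩
      | zero => rw [map_zero, zero_mulVec]; exact zero_mem _
      | add x y _ _ hx hy => rw [map_add, add_mulVec]; exact add_mem hx hy
      | smul c x _ hx =>
        have h1 : f₀ (c • x) = c • f₀ x := (f₀.toLinearMap.restrictScalars ℤ_[p]).map_smul c x
        have h2 : f₀ (c • x) *ᵥ Pi.single j 1 =
            (algebraMap ℤ_[p] O c) • (f₀ x *ᵥ Pi.single j (1 : K)) := by
          rw [h1, smul_mulVec, algebraMap_smul]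
        rw [h2]
        exact Λ'.smul_mem _ hx
    have hle : Λ ≤ Λ' := by
      refine Submodule.span_le.mpr ?_
      rintro v ⟨r, hr, j, rfl⟩
      exact hmem r (by rw [hT]; exact hr) j
    have hN : IsNoetherian O Λ' := isNoetherian_of_fg_of_noetherian _ hfg'
    exact Submodule.FG.of_le hfg' hle
  have hlat : Submodule.IsLattice K Λ :=
    { fg := hΛfg
      span_eq_top := by
        rw [eq_top_iff, ← (Pi.basisFun K (Fin n)).span_eq]
        refine Submodule.span_mono ?_
        rintro _ ⟨j, rfl⟩
        rw [Pi.basisFun_apply]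
        exact hsingle j }
  have hfree : Module.Free O Λ := Submodule.IsLattice.free K Λ
  have hrank : Module.finrank O Λ = n := by
    rw [Submodule.IsLattice.finrank_of_pi K Λ, Fintype.card_fin]
  let b := Module.finBasisOfFinrankEq O Λ hrank
  let b' := b.extendOfIsLattice K
  have hb' : ∀ j, b' j = (b j : Fin n → K) := b.extendOfIsLattice_apply K
  have hrepr : ∀ v : Λ, ∀ i, b'.repr v i = (b.repr v i : K) := by
    intro v i
    have h1 : (v : Fin n → K) = ∑ i, (b.repr v i : K) • b' i := by
      conv_lhs => rw [← b.sum_repr v]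
      rw [Submodule.coe_sum]
      refine Finset.sum_congr rfl fun i _ => ?_
      rw [hb']; rfl
    rw [h1, b'.repr_sum_self]
  let e : Matrix (Fin n) (Fin n) K ≃ₐ[K] Matrix (Fin n) (Fin n) K :=
    Matrix.toLinAlgEquiv'.trans (LinearMap.toMatrixAlgEquiv b')
  have he : ∀ x i j, e x i j = b'.repr (x *ᵥ b' j) i := by
    intro x i j
    simp [e, LinearMap.toMatrixAlgEquiv_apply]
  let f : E ≃ₐ[ℚ_[p]] Matrix (Fin n) (Fin n) K := f₀.trans (e.restrictScalars ℚ_[p])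
  have hf : ∀ x, f x = e (f₀ x) := fun _ => rfl
  have hRf : ∀ x ∈ R, ∀ i j, IsIntegral ℤ_[p] (f x i j) := by
    intro x hx i j
    rw [hf, he, hb', hrepr ⟨_, hΛstab x hx _ (b j).2⟩]
    exact (b.repr _ i).2
  -- the endomorphism ring of `Λ`, an order containing `R`
  let R' : Subalgebra ℤ_[p] E :=
    { carrier := {x | ∀ i j, IsIntegral ℤ_[p] (f x i j)}
      mul_mem' := fun {x y} hx hy i j => by
        rw [map_mul, mul_apply]
        exact IsIntegral.sum _ fun l _ => (hx i l).mul (hy l j)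
      add_mem' := fun {x y} hx hy i j => by
        rw [map_add, Matrix.add_apply]
        exact (hx i j).add (hy i j)
      algebraMap_mem' := fun z => hRf _ (R.algebraMap_mem z) }
  have hR' : IsOrderZp p E R' := by
    constructor
    · let g : Matrix (Fin n) (Fin n) O →ₗ[ℤ_[p]] E :=
        (f.symm.toLinearMap.restrictScalars ℤ_[p]).comp (O.val.toLinearMap.mapMatrix)
      have : Module.Finite ℤ_[p] (Matrix (Fin n) (Fin n) O) :=
        inferInstanceAs (Module.Finite ℤ_[p] (Fin n → Fin n → O))
      have hg : Subalgebra.toSubmodule R' = LinearMap.range g := by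
        ext x
        constructor
        · intro hx
          refine ⟨Matrix.of fun i j => (⟨f x i j, hx i j⟩ : O), ?_⟩
          exact f.symm_apply_apply x
        · rintro ⟨y, rfl⟩ i j
          have : f (g y) = O.val.toLinearMap.mapMatrix y := f.apply_symm_apply _
          rw [this]
          exact (y i j).2
      rw [hg, ← Module.Finite.iff_fg]
      infer_instance
    · exact top_le_iff.mp (hR.2 ▸ Submodule.span_mono hRf)
  have hRR' := hRmax R' hR' hRf
  exact ⟨f, fun x => ⟨hRf x, fun hx => hRR' ▸ (show x ∈ R' from hx)⟩⟩

end IntegralModel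
end UnitForms

/-! ### Unit forms over a single matrix algebra -/

namespace UnitForms
open Matrix
universe u

/-- An involution restricts to a stable subring. -/
theorem IsInv.restrict {A B : Type*} [Ring A] [Ring B] {D : B → B} (h : IsInv D) (ι : A →+* B)
    (hι : Function.Injective ι) (hD : ∀ x, ∃ y, ι y = D (ι x)) :
    ∃ D' : A → A, IsInv D' ∧ ∀ x, ι (D' x) = D (ι x) := by
  choose D' hD' using hD
  refine ⟨D', ⟨fun x y => hι ?_, fun x y => hι ?_, fun x => hι ?_⟩, hD'⟩
  · rw [hD', map_add, h.add, map_add, hD', hD']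
  · rw [hD', map_mul, h.mul, map_mul, hD', hD']
  · rw [hD', hD', h.inv]

/-- An involution descends to the quotient by a stable ideal. -/
theorem IsInv.descend {A B : Type*} [Ring A] [Ring B] {D : A → A} (h : IsInv D) (π : A →+* B)
    (hπ : Function.Surjective π) (hD : ∀ x, π x = 0 → π (D x) = 0) :
    ∃ D' : B → B, IsInv D' ∧ ∀ x, D' (π x) = π (D x) := by
  have key : ∀ x y, π x = π y → π (D x) = π (D y) := by
    intro x y hxy
    have h1 := hD (x - y) (by rw [map_sub, hxy, sub_self])
    rw [h.sub, map_sub] at h1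
    exact sub_eq_zero.mp h1
  obtain ⟨D', hD'⟩ : ∃ D' : B → B, ∀ x, D' (π x) = π (D x) :=
    ⟨fun b => π (D (Function.surjInv hπ b)), fun x => key _ _ (Function.surjInv_eq hπ _)⟩
  refine ⟨D', ⟨fun x y => ?_, fun x y => ?_, fun x => ?_⟩, hD'⟩
  · obtain ⟨x, rfl⟩ := hπ x
    obtain ⟨y, rfl⟩ := hπ y
    rw [← map_add, hD', hD', hD', h.add, map_add]
  · obtain ⟨x, rfl⟩ := hπ x
    obtain ⟨y, rfl⟩ := hπ y
    rw [← map_mul, hD', hD', hD', h.mul, map_mul]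
  · obtain ⟨x, rfl⟩ := hπ x
    rw [hD', hD', h.inv]

/-- A symmetric element `1 + p x` has a symmetric square root, found in the commutative subalgebra
`ℤ_p[x]`, on which the involution is trivial. -/
theorem IsInv.exists_symmetric_sqrt {p : ℕ} [Fact p.Prime] (hodd : p ≠ 2) {A : Type*} [Ring A]
    [Algebra ℤ_[p] A] [Module.Finite ℤ_[p] A] {D : A → A} (h : IsInv D)
    (hZ : ∀ z : ℤ_[p], D (algebraMap _ _ z) = algebraMap _ _ z) {x : A} (hx : D x = x) :
    ∃ t, D t = t ∧ t * t = 1 + p * x := by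
  let C := Algebra.adjoin ℤ_[p] {x}
  have : IsMulCommutative C := Algebra.isMulCommutative_adjoin ℤ_[p] (by
    rintro a ha b hb
    rw [Set.mem_singleton_iff.mp ha, Set.mem_singleton_iff.mp hb])
  have hfin : Module.Finite ℤ_[p] C :=
    Module.Finite.of_injective (Subalgebra.toSubmodule C).subtype Subtype.val_injective
  have hfix : ∀ t ∈ C, D t = t := by
    intro t ht
    induction ht using Algebra.adjoin_induction with
    | mem y hy => rw [Set.mem_singleton_iff.mp hy, hx]
    | algebraMap z => exact hZ z
    | add y z _ _ ihy ihz => rw [h.add, ihy, ihz]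
    | mul y z hy hz ihy ihz =>
      rw [h.mul, ihy, ihz]
      exact congrArg Subtype.val (mul_comm (⟨z, hz⟩ : C) ⟨y, hy⟩)
  obtain ⟨t, ht⟩ := exists_sqrt hodd C ⟨x, Algebra.subset_adjoin rfl⟩
  refine ⟨t, hfix t t.2, ?_⟩
  have h1 := congrArg (fun c : C => (c : A)) ht
  simpa using h1

section MatrixCase

variable {p : ℕ} [Fact p.Prime] {K : Type u} [Field K] [Algebra ℚ_[p] K]
  [FiniteDimensional ℚ_[p] K] [Algebra ℤ_[p] K] [IsScalarTower ℤ_[p] ℚ_[p] K]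

/-- The case of an involution of `M_n(K)` stabilizing `M_n(O)`. The equation is solved over the residue
field, the solution `s` is lifted, and the remaining symmetric element congruent to `1` modulo `p` is
the square of a symmetric element. The hypothesis on `m` intervenes only when `†` is of the first kind:
the determinant of `a† q a = m` then reads `m ^ n = det q * (det a) ^ 2`, so `n` is even and `det q` is
a square. -/
theorem matrix_case (hodd : p ≠ 2) (hK : PUniformizes p K) {n : ℕ} (hn : 0 < n)
    {D : Matrix (Fin n) (Fin n) K → Matrix (Fin n) (Fin n) K} (h : IsInv D)
    (hQ : ∀ r : ℚ_[p], D (algebraMap _ _ r) = algebraMap _ _ r)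
    (hDint : ∀ x, (∀ i j, IsIntegral ℤ_[p] (x i j)) → ∀ i j, IsIntegral ℤ_[p] (D x i j))
    {q qi : Matrix (Fin n) (Fin n) K} (hq : ∀ i j, IsIntegral ℤ_[p] (q i j))
    (hqi : ∀ i j, IsIntegral ℤ_[p] (qi i j)) (hqqi : q * qi = 1)
    (hqd : D q = q) {a : Matrix (Fin n) (Fin n) K} {m : ℚ_[p]} (hm : m ≠ 0)
    (ha : D a * q * a = algebraMap _ _ m) (hodd' : ¬ Even m.valuation) :
    ∃ b, IsUnit b ∧ D b * q * b = 1 := by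
  have : Nonempty (Fin n) := ⟨⟨0, hn⟩⟩
  let O := integralClosure ℤ_[p] K
  have hfinO : Module.Finite ℤ_[p] O := finite_integralClosure
  obtain ⟨k, _, _, ρ, hρ, h2, hρ0, hρu⟩ := exists_residue hodd hK
  let ι : O →+* K := algebraMap O K
  have hιinj : Function.Injective ι := Subtype.val_injective
  let M : Matrix (Fin n) (Fin n) O →+* Matrix (Fin n) (Fin n) K := ι.mapMatrix
  have hMinj : Function.Injective M := fun x y hxy => by
    ext i j
    exact congrFun (congrFun hxy i) j
  have hMlift : ∀ x : Matrix (Fin n) (Fin n) K, (∀ i j, IsIntegral ℤ_[p] (x i j)) →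
      ∃ y, M y = x := fun x hx => ⟨Matrix.of fun i j => (⟨x i j, hx i j⟩ : O), by ext i j; rfl⟩
  have hMint : ∀ y i j, IsIntegral ℤ_[p] (M y i j) := fun y i j => (y i j).2
  have hpO : (p : O) ≠ 0 := by
    intro h0
    have := congrArg (fun t : O => (t : K)) h0
    exact natCast_p_ne_zero (p := p) (K := K) (by simpa using this)
  -- the induced involutions on `M_n(O)` and on `M_n(k)`
  obtain ⟨DO, hDO, hMD⟩ := h.restrict M hMinj fun x => hMlift _ (hDint _ (hMint x))
  have hDZ : ∀ z : ℤ_[p], DO (algebraMap _ _ z) = algebraMap _ _ z := by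
    intro z
    apply hMinj
    have : M (algebraMap ℤ_[p] _ z) = algebraMap ℚ_[p] _ (algebraMap ℤ_[p] ℚ_[p] z) := by
      rw [← IsScalarTower.algebraMap_apply, algebraMap_eq_diagonal, algebraMap_eq_diagonal]
      ext i j
      by_cases hij : i = j
      · subst hij
        simp [M, ι]
      · simp [M, hij]
    rw [hMD, this, hQ]
  have hDp : ∀ x, DO ((p : Matrix (Fin n) (Fin n) O) * x) = p * DO x := by
    intro x
    have h1 := hDZ p
    rw [map_natCast] at h1
    rw [hDO.mul, h1, (Nat.cast_commute p _).eq]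
  let π : Matrix (Fin n) (Fin n) O →+* Matrix (Fin n) (Fin n) k := ρ.mapMatrix
  have hπsurj : Function.Surjective π := fun y =>
    ⟨Matrix.of fun i j => Function.surjInv hρ (y i j), by
      ext i j; exact Function.surjInv_eq hρ _⟩
  have hpmul : ∀ (x : Matrix (Fin n) (Fin n) O) i j, ((p : Matrix (Fin n) (Fin n) O) * x) i j = p * x i j := by
    intro x i j
    rw [← nsmul_eq_mul, ← nsmul_eq_mul]; rfl
  have hπ0 : ∀ x, π x = 0 ↔ ∃ y, x = p * y := by
    intro x
    constructor
    · intro hx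
      have h1 : ∀ i j, ∃ c, x i j = p * c := fun i j => (hρ0 _).mp (congrFun (congrFun hx i) j)
      choose y hy using h1
      exact ⟨Matrix.of y, by ext i j; rw [hpmul, hy]; rfl⟩
    · rintro ⟨y, rfl⟩
      ext i j
      exact (hρ0 _).mpr ⟨y i j, hpmul y i j⟩
  have hpcancel : ∀ x y : Matrix (Fin n) (Fin n) O, p * x = p * y → x = y := by
    intro x y hxy
    ext i j
    have h1 := congrFun (congrFun hxy i) j
    rw [hpmul, hpmul] at h1
    exact congrArg _ (mul_left_cancel₀ hpO h1)
  obtain ⟨Dk, hDk, hDkπ⟩ := hDO.descend π hπsurj fun x hx => by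
    obtain ⟨y, rfl⟩ := (hπ0 x).mp hx
    exact (hπ0 _).mpr ⟨DO y, hDp y⟩
  obtain ⟨Q, rfl⟩ := hMlift q hq
  obtain ⟨Qi, rfl⟩ := hMlift qi hqi
  have hQQi : Q * Qi = 1 := hMinj (by rw [map_mul, hqqi, map_one])
  have hQu : IsUnit Q := IsUnit.of_mul_eq_one _ hQQi
  have hDQ : DO Q = Q := hMinj (by rw [hMD, hqd])
  -- when the involution is of the first kind over the residue field, `det q` is a square
  have hsq : (∀ c : k, Dk (scalar (Fin n) c) = scalar (Fin n) c) → IsSquare (π Q).det := by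
    intro hfix
    obtain ⟨σ, H, hσσ, hσ, hH, hHx⟩ := h.exists_conj hn
    have hσO : ∀ c : O, ∃ c' : O, ι c' = σ (ι c) ∧ ρ c' = ρ c := by
      intro c
      have h1 : M (DO (scalar (Fin n) c)) = scalar (Fin n) (σ (ι c)) := by
        have : M (scalar (Fin n) c) = scalar (Fin n) (ι c) := by
          simp [M, scalar_apply, diagonal_map]
        rw [hMD, this, hσ]
      refine ⟨DO (scalar (Fin n) c) ⟨0, hn⟩ ⟨0, hn⟩, ?_, ?_⟩
      · exact (congrFun (congrFun h1 ⟨0, hn⟩) ⟨0, hn⟩).trans (by simp)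
      · have h2 := hDkπ (scalar (Fin n) c)
        have : π (scalar (Fin n) c) = scalar (Fin n) (ρ c) := by
          simp [π, scalar_apply, diagonal_map]
        rw [this, hfix] at h2
        exact (congrFun (congrFun h2 ⟨0, hn⟩) ⟨0, hn⟩).symm.trans (by simp)
    -- otherwise `c - σ c = p ^ j * u` with `u` a unit and `σ u = -u`, whereas `σ` is trivial on `k`
    have hσid : ∀ c, σ c = c := by
      intro c
      by_contra hne
      have hx : c - σ c ≠ 0 := fun h0 => hne (sub_eq_zero.mp h0).symm
      obtain ⟨j, u, hu⟩ := exists_eq_p_zpow_mul hK hx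
      have h3 : σ (c - σ c) = -(c - σ c) := by rw [map_sub, hσσ]; ring
      rw [hu, map_mul, map_zpow₀, map_natCast, ← mul_neg] at h3
      have h4 : σ (ι u) = -ι u :=
        mul_left_cancel₀ (zpow_ne_zero _ (natCast_p_ne_zero (p := p))) h3
      obtain ⟨c', hc', hc''⟩ := hσO u
      rw [h4, ← map_neg] at hc'
      rw [hιinj hc', map_neg] at hc''
      have h5 : (2 : k) * ρ u = 0 := by linear_combination -hc''
      exact mul_ne_zero h2 (u.isUnit.map ρ).ne_zero h5
    have hdet : ∀ x, (D x).det = x.det := by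
      intro x
      have h1 := congrArg det (hHx x)
      have h2 : x.map σ = x := by ext i j; exact hσid _
      rw [h2, det_mul, det_mul, det_transpose, mul_comm] at h1
      exact mul_right_cancel₀ ((isUnit_iff_isUnit_det H).mp hH).ne_zero h1
    have hmn : algebraMap ℚ_[p] K m ^ n = ι Q.det * (a.det * a.det) := by
      have h1 := congrArg det ha
      have h2 : (M Q).det = ι Q.det := (RingHom.map_det ι Q).symm
      rw [det_mul, det_mul, hdet, h2, algebraMap_eq_diagonal, det_diagonal] at h1
      simp at h1
      rw [← h1]; ring
    have hNQ : spectralNorm ℚ_[p] K (ι Q.det) = 1 := by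
      have h1 := (isIntegral_iff_spectralNorm_le_one (p := p) _).mp Q.det.2
      have h2 := (isIntegral_iff_spectralNorm_le_one (p := p) _).mp Qi.det.2
      have h3 : ι Q.det * ι Qi.det = 1 := by rw [← map_mul, ← det_mul, hQQi, det_one, map_one]
      have h4 := spectralNorm_mul' (p := p) (ι Q.det) (ι Qi.det)
      rw [h3, spectralNorm_one] at h4
      have h5 := spectralNorm_nonneg (K := ℚ_[p]) (ι Qi.det)
      have h6 := spectralNorm_nonneg (K := ℚ_[p]) (ι Q.det)
      refine le_antisymm h1 ?_
      have h2' : spectralNorm ℚ_[p] K (ι Qi.det) ≤ 1 := h2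
      nlinarith
    have hmK : algebraMap ℚ_[p] K m ≠ 0 := (map_ne_zero _).mpr hm
    have hda : a.det ≠ 0 := by
      intro h0
      rw [h0, mul_zero, mul_zero] at hmn
      exact pow_ne_zero _ hmK hmn
    obtain ⟨j, hj⟩ := exists_spectralNorm_eq (p := p) hK hda
    have hval : m.valuation * n = 2 * j := by
      have h1 := congrArg (spectralNorm ℚ_[p] K) hmn
      rw [spectralNorm_pow', spectralNorm_padic, spectralNorm_mul', spectralNorm_mul', hNQ, hj,
        one_mul, Padic.norm_eq_zpow_neg_valuation hm, ← zpow_natCast, ← _root_.zpow_mul,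
        ← zpow_add₀ (by exact_mod_cast (Fact.out : p.Prime).ne_zero)] at h1
      have h2 := zpow_right_injective₀ (a := (p : ℝ))
        (by exact_mod_cast (Fact.out : p.Prime).pos)
        (by exact_mod_cast (Fact.out : p.Prime).ne_one) h1
      linarith
    obtain ⟨l, hl⟩ : Even n := by
      have h1 : Even (m.valuation * n) := by rw [hval]; exact even_two_mul _
      rcases Int.even_mul.mp h1 with h2 | h2
      · exact absurd h2 hodd'
      · exact_mod_cast h2
    have hy : (algebraMap ℚ_[p] K m ^ l / a.det) ^ 2 = ι Q.det := by
      rw [div_pow, div_eq_iff (pow_ne_zero _ hda), ← pow_mul, pow_two a.det, ← hmn, hl, mul_two]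
    have hyi : IsIntegral ℤ_[p] (algebraMap ℚ_[p] K m ^ l / a.det) := by
      apply IsIntegral.of_pow two_pos
      rw [hy]
      exact Q.det.2
    refine ⟨ρ ⟨_, hyi⟩, ?_⟩
    have h1 : Q.det = (⟨_, hyi⟩ : O) * ⟨_, hyi⟩ := by
      apply hιinj
      rw [← hy, pow_two]
      rfl
    rw [← map_mul, ← h1, RingHom.map_det]
  obtain ⟨s, hs⟩ := exists_dag_mul_self h2 hDk (hQu.map π) (by rw [hDkπ, hDQ]) hsq
  -- a lift of `s` is invertible, so `q` may be assumed congruent to `1` modulo `p`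
  obtain ⟨S, rfl⟩ := hπsurj s
  have hSu : IsUnit S := by
    rw [isUnit_iff_isUnit_det]
    apply hρu
    have h1 := (isUnit_iff_isUnit_det _).mp (hQu.map π)
    rw [← hs, det_mul] at h1
    have h3 := (isUnit_of_mul_isUnit_right h1).ne_zero
    rw [RingHom.map_det]
    exact h3
  obtain ⟨T, hST⟩ := hSu.exists_right_inv
  have hTS : T * S = 1 := mul_eq_one_comm.mp hST
  have hDTS : DO S * DO T = 1 := by rw [← hDO.mul, hTS, hDO.one]
  obtain ⟨X, hX⟩ : ∃ X, DO T * Q * T - 1 = p * X := by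
    apply (hπ0 _).mp
    rw [map_sub, map_mul, map_mul, map_one, ← hs, ← hDkπ, ← mul_assoc, ← hDk.mul,
      ← map_mul, hST, map_one, hDk.one, one_mul, ← map_mul, hST, map_one, sub_self]
  have hDX : DO X = X := by
    apply hpcancel
    rw [← hDp, ← hX, hDO.sub, hDO.one, hDO.mul, hDO.mul, hDO.inv, hDQ, mul_assoc]
  have hfinM : Module.Finite ℤ_[p] (Matrix (Fin n) (Fin n) O) :=
    inferInstanceAs (Module.Finite ℤ_[p] (Fin n → Fin n → O))
  obtain ⟨t, hDt, ht⟩ := hDO.exists_symmetric_sqrt hodd hDZ hDX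
  rw [← hX, add_sub_cancel] at ht
  have hTu : IsUnit T := IsUnit.of_mul_eq_one _ hTS
  have htu : IsUnit t := by
    have h1 : IsUnit (t * t) := by
      rw [ht]; exact ((hDO.isUnit hTu).mul hQu).mul hTu
    rw [isUnit_iff_isUnit_det, det_mul] at h1
    exact (isUnit_iff_isUnit_det _).mpr (isUnit_of_mul_isUnit_left h1)
  obtain ⟨V, hV⟩ := (htu.mul hSu).exists_right_inv
  have hW : DO (t * S) * (t * S) = Q := by
    calc DO (t * S) * (t * S) = DO S * (t * t) * S := by rw [hDO.mul, hDt]; simp only [mul_assoc]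
      _ = DO S * DO T * Q * (T * S) := by rw [ht]; simp only [mul_assoc]
      _ = Q := by rw [hDTS, hTS, one_mul, mul_one]
  have hVu : IsUnit V := IsUnit.of_mul_eq_one _ (mul_eq_one_comm.mp hV)
  refine ⟨M V, hVu.map M, ?_⟩
  rw [← hMD, ← map_mul, ← map_mul, ← hW, ← mul_assoc, ← hDO.mul, mul_assoc, hV, hDO.one, mul_one,
    map_one]

end MatrixCase
end UnitForms

/-! ### Central idempotents -/

namespace UnitForms
section Factors

variable {E : Type*} [Ring E]

/-- In a simple algebra with involution, a nonzero central idempotent fixed by the involution is `1`. -/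
theorem IsInv.eq_one_of_central {dag : E → E} (h : IsInv dag)
    (hsimple : ∀ I : TwoSidedIdeal E, (∀ x ∈ I, dag x ∈ I) → I = ⊥ ∨ I = ⊤)
    {s : E} (hs : ∀ x, s * x = x * s) (hss : s * s = s) (hd : dag s = s) (h0 : s ≠ 0) : s = 1 := by
  let I : TwoSidedIdeal E := TwoSidedIdeal.mk' {x | s * x = x} (mul_zero s)
    (fun {x y} hx hy => by
      change s * (x + y) = x + y
      rw [mul_add, show s * x = x from hx, show s * y = y from hy])
    (fun {x} hx => by
      change s * (-x) = -x
      rw [mul_neg, show s * x = x from hx])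
    (fun {x y} hy => by
      change s * (x * y) = x * y
      rw [← mul_assoc, hs, mul_assoc, show s * y = y from hy])
    (fun {x y} hx => by
      change s * (x * y) = x * y
      rw [← mul_assoc, show s * x = x from hx])
  have hI : ∀ x, x ∈ I ↔ s * x = x := fun x => TwoSidedIdeal.mem_mk' _ _ _ _ _ _ _
  rcases hsimple I fun x hx => by
    rw [hI] at hx ⊢
    rw [hs]
    conv_lhs => rw [← hd, ← h.mul, hx] with h1 | h1
  · have : s ∈ I := (hI s).mpr hss
    rw [h1] at this
    exact absurd ((TwoSidedIdeal.mem_bot E).mp this) h0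
  · have : (1 : E) ∈ I := by rw [h1]; trivial
    rw [hI, mul_one] at this
    exact this

/-- When the involution exchanges two complementary central idempotents `e` and `e†`, every symmetric
unit is equivalent to `1`, through `b = e + q⁻¹ e†`. -/
theorem IsInv.exists_of_swap {dag : E → E} (h : IsInv dag) {e q qi : E}
    (he : ∀ x, e * x = x * e) (hee : e * e = e) (h0 : e * dag e = 0) (h1 : e + dag e = 1)
    (hqqi : q * qi = 1) (hiq : qi * q = 1) (hqd : dag q = q) :
    ∃ b, dag b * q * b = 1 := by
  have hqid : dag qi = qi := by
    have h2 := congrArg dag hqqi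
    rw [h.mul, hqd, h.one] at h2
    calc dag qi = dag qi * (q * qi) := by rw [hqqi, mul_one]
      _ = qi := by rw [← mul_assoc, h2, one_mul]
  set e' := dag e with he'
  have h3 : e' = 1 - e := by rw [← h1]; abel
  have h0' : e' * e = 0 := by rw [h3, sub_mul, one_mul, hee, sub_self]
  have hee' : e' * e' = e' := by rw [h3] at h0' ⊢; rw [mul_sub, mul_one, h0', sub_zero]
  refine ⟨e + qi * e', ?_⟩
  have hdb : dag (e + qi * e') = e' + e * qi := by
    rw [h.add, h.mul, hqid, ← he', he', h.inv]
  rw [hdb]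
  calc (e' + e * qi) * q * (e + qi * e')
      = e' * (q * e) + e' * (q * qi) * e' + e * (qi * q) * e + e * (qi * q) * qi * e' := by
        noncomm_ring
    _ = e' * (e * q) + e' * e' + e * e + e * qi * e' := by
        rw [← he q, hqqi, hiq]; simp only [mul_one]
    _ = 1 := by
        rw [← mul_assoc, h0', zero_mul, hee', hee, he qi, mul_assoc, h0, mul_zero, zero_add, add_zero,
          add_comm, h1]

end Factors
end UnitForms

/-! ### Reduction to a single factor -/

namespace UnitForms
open Matrix
section Final
variable {p : ℕ} [Fact p.Prime]
  {E : Type*} [Ring E] [Algebra ℚ_[p] E] [Algebra ℤ_[p] E] [IsScalarTower ℤ_[p] ℚ_[p] E]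

/-- The case where `E` is a single matrix algebra, by transport along the identification of the maximal
order with `M_n(O)`. -/
theorem single_factor_case (hodd : p ≠ 2) {K : Type*} [Field K] [Algebra ℚ_[p] K]
    [FiniteDimensional ℚ_[p] K]
    (hur : ∃ (m : ℕ) (x : K), 0 < m ∧ ¬ p ∣ m ∧ IsPrimitiveRoot x m ∧
      Algebra.adjoin ℚ_[p] {x} = ⊤) {n : ℕ} (hn : 0 < n)
    (f₀ : E ≃ₐ[ℚ_[p]] Matrix (Fin n) (Fin n) K)
    {dag : E → E} (h : IsInv dag)
    (hQ : ∀ r : ℚ_[p], dag (algebraMap ℚ_[p] E r) = algebraMap ℚ_[p] E r)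
    {R : Subalgebra ℤ_[p] E} (hR : IsOrderZp p E R)
    (hRmax : ∀ R' : Subalgebra ℤ_[p] E, IsOrderZp p E R' → R ≤ R' → R' = R)
    (hRdag : ∀ x ∈ R, dag x ∈ R)
    {q qi : E} (hqR : q ∈ R) (hqiR : qi ∈ R) (hqqi : q * qi = 1) (hqd : dag q = q)
    {a : E} {m : ℚ_[p]} (hm : m ≠ 0) (ha : dag a * q * a = algebraMap ℚ_[p] E m)
    (hmv : ¬ Even m.valuation) : ∃ b : E, IsUnit b ∧ dag b * q * b = 1 := by
  let _ : Algebra ℤ_[p] K := ((algebraMap ℚ_[p] K).comp (algebraMap ℤ_[p] ℚ_[p])).toAlgebra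
  have : IsScalarTower ℤ_[p] ℚ_[p] K := IsScalarTower.of_algebraMap_eq' rfl
  have hK : PUniformizes p K := fun y => exists_eq_p_mul_of_not_isIntegral_inv hur
  obtain ⟨f, hf⟩ := exists_integral_model hK f₀ hR hRmax
  let D : Matrix (Fin n) (Fin n) K → Matrix (Fin n) (Fin n) K := fun x => f (dag (f.symm x))
  have hDf : ∀ x, D (f x) = f (dag x) := fun x => by simp [D]
  have hD : IsInv D :=
    ⟨fun x y => by simp only [D]; rw [map_add, h.add, map_add],
      fun x y => by simp only [D]; rw [map_mul, h.mul, map_mul],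
      fun x => by simp only [D]; rw [f.symm_apply_apply, h.inv, f.apply_symm_apply]⟩
  obtain ⟨b, hb, hbq⟩ := matrix_case hodd hK hn hD (q := f q) (qi := f qi) (a := f a) (m := m)
    (fun r => by rw [← f.commutes, hDf, hQ])
    (fun x hx => by
      obtain ⟨x, rfl⟩ := f.surjective x
      rw [hDf]
      exact (hf _).mp (hRdag _ ((hf _).mpr hx)))
    ((hf _).mp hqR) ((hf _).mp hqiR) (by rw [← map_mul, hqqi, map_one]) (by rw [hDf, hqd]) hm
    (by rw [hDf, ← map_mul, ← map_mul, ha, f.commutes]) hmv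
  refine ⟨f.symm b, hb.map f.symm, f.injective ?_⟩
  rw [map_mul, map_mul, map_one, ← hDf, f.apply_symm_apply, hbq]

end Final
end UnitForms

/-- **Unimodular case of the split local calculation**: for a unit `q` of a `†`-stable
maximal order in a split simple `ℚ_p`-algebra with involution (`p` odd, unramified
centre), either `v_p(a† q a)` is even or `b† q b = 1` has an invertible solution. -/
theorem unit_forms_local_split
    (p : ℕ) [Fact p.Prime] (hodd : p ≠ 2)
    (E : Type*) [Ring E] [Nontrivial E] [Algebra ℚ_[p] E] [FiniteDimensional ℚ_[p] E]
    [Algebra ℤ_[p] E] [IsScalarTower ℤ_[p] ℚ_[p] E]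
    (dag : E → E) (hdag : IsInvolutionQp p E dag)
    -- `(E, †)` is simple as an algebra with involution
    (hsimple : ∀ I : TwoSidedIdeal E, (∀ x ∈ I, dag x ∈ I) → I = ⊥ ∨ I = ⊤)
    -- `E` is split with unramified centre
    (hsplit : Nonempty (UnramifiedSplitting p E))
    -- `R` is a `†`-stable maximal order in `E`
    (R : Subalgebra ℤ_[p] E) (hR : IsOrderZp p E R)
    (hRmax : ∀ R' : Subalgebra ℤ_[p] E, IsOrderZp p E R' → R ≤ R' → R' = R)
    (hRdag : ∀ x ∈ R, dag x ∈ R)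
    -- `q` is a unit of `R`
    (q : E) (hqR : q ∈ R) (qi : E) (hqiR : qi ∈ R) (hqi : q * qi = 1) (hiq : qi * q = 1)
    -- `a† q a = m ∈ ℚ_p^×`
    (a : E) (m : ℚ_[p]) (hm : m ≠ 0) (ha : dag a * q * a = algebraMap ℚ_[p] E m) :
    Even m.valuation ∨ ∃ b : E, IsUnit b ∧ dag b * q * b = 1 := by
  obtain ⟨hadd, hmul, hinv, hQ⟩ := hdag
  have h : UnitForms.IsInv dag := ⟨hadd, hmul, hinv⟩
  refine or_iff_not_imp_left.mpr fun hmv => ?_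
  have : IsNoetherianRing E := IsNoetherianRing.of_finite ℚ_[p] E
  -- `a` is invertible, and so `q` is symmetric
  have haU : IsUnit a := by
    refine IsUnit.of_mul_eq_one_right (algebraMap ℚ_[p] E m⁻¹ * (dag a * q)) ?_
    rw [mul_assoc, ha, ← map_mul, inv_mul_cancel₀ hm, map_one]
  have hqd : dag q = q := by
    have h1 := congrArg dag ha
    rw [hmul, hmul, hinv, hQ, ← ha, ← mul_assoc] at h1
    exact (h.isUnit haU).mul_left_cancel (haU.mul_right_cancel h1)
  obtain ⟨⟨n, K, finK, unramK, d, dpos, φ⟩⟩ := hsplit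
  have hn : 0 < n := by
    rcases Nat.eq_zero_or_pos n with rfl | hn
    · exact absurd (φ.injective (Subsingleton.elim (φ 0) (φ 1))) zero_ne_one
    · exact hn
  let i : Fin n := ⟨0, hn⟩
  have := finK i
  have : Nonempty (Fin (d i)) := ⟨⟨0, dpos i⟩⟩
  -- the central idempotent of the first factor
  obtain ⟨e, he⟩ : ∃ e, φ e = Pi.single i 1 := φ.surjective _
  have hec : ∀ x, e * x = x * e := by
    intro x
    apply φ.injective
    rw [map_mul, map_mul, he]
    ext j : 1
    by_cases hj : j = i
    · subst hj; simp
    · simp [hj]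
  have hφe : ∀ x, φ (e * x) = Pi.single i (φ x i) := by
    intro x
    rw [map_mul, he]
    ext j : 1
    by_cases hj : j = i
    · subst hj; simp
    · simp [hj]
  have hee : e * e = e := φ.injective (by rw [hφe, he]; simp)
  have he0 : e ≠ 0 := by
    rintro rfl
    have h1 := congrFun he i
    simp at h1
  by_cases hde : dag e = e
  · have he1 := h.eq_one_of_central hsimple hec hee hde he0
    let f₀ : E ≃ₐ[ℚ_[p]] Matrix (Fin (d i)) (Fin (d i)) (K i) :=
      AlgEquiv.ofBijective ((Pi.evalAlgHom ℚ_[p] _ i).comp φ.toAlgHom) (by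
        constructor
        · intro x y hxy
          have h1 : φ x i = φ y i := hxy
          apply φ.injective
          rw [← one_mul x, ← one_mul y, ← he1, hφe, hφe, h1]
        · intro y
          obtain ⟨x, hx⟩ := φ.surjective (Pi.single i y)
          refine ⟨x, ?_⟩
          change φ x i = y
          rw [hx]; simp)
    exact UnitForms.single_factor_case hodd (unramK i) (dpos i) f₀ h hQ hR hRmax hRdag hqR hqiR hqi hqd hm
      ha hmv
  -- the `i`-th component of `e†` is an idempotent scalar, hence `0` as `e† ≠ e`
  · have hec' : ∀ x, dag e * x = x * dag e := by
      intro x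
      have h1 := congrArg dag (hec (dag x))
      rw [hmul, hmul, hinv] at h1
      exact h1.symm
    have hee' : dag e * dag e = dag e := by rw [← hmul, hee]
    have h0 : e * dag e = 0 := by
      obtain ⟨c, hc⟩ : φ (dag e) i ∈ Set.range (Matrix.scalar (Fin (d i))) := by
        rw [Matrix.mem_range_scalar_iff_commute_single']
        intro j l
        obtain ⟨x, hx⟩ := φ.surjective (Pi.single i (Matrix.single j l 1))
        have h1 := congrFun (congrArg φ (hec' x)) i
        rw [map_mul, map_mul, hx] at h1
        rw [Pi.mul_apply, Pi.mul_apply, Pi.single_eq_same] at h1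
        exact h1.symm
      have hcc : c * c = c := by
        have h1 := congrFun (congrArg φ hee') i
        rw [map_mul, Pi.mul_apply, ← hc, ← map_mul] at h1
        exact Matrix.scalar_inj.mp h1
      rcases IsIdempotentElem.iff_eq_zero_or_one.mp hcc with rfl | rfl
      · apply φ.injective
        rw [hφe, ← hc]; simp
      · have h1 : e * dag e = e := by
          apply φ.injective
          rw [hφe, ← hc, he]; simp
        refine absurd ?_ hde
        have h2 := congrArg dag h1
        rw [hmul, hinv, h1] at h2
        exact h2.symm
    have h0' : dag e * e = 0 := by rw [← hec, h0]
    have h1 : e + dag e = 1 := by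
      refine h.eq_one_of_central hsimple (fun x => ?_) ?_ ?_ fun hz => ?_
      · rw [add_mul, mul_add, hec, hec']
      · rw [add_mul, mul_add, mul_add, hee, hee', h0, h0', add_zero, zero_add]
      · rw [hadd, hinv, add_comm]
      · have h2 := congrArg (e * ·) hz
        simp only [mul_add, hee, h0, add_zero, mul_zero] at h2
        exact he0 h2
    obtain ⟨b, hb⟩ := h.exists_of_swap hec hee h0 h1 hqi hiq hqd
    exact ⟨b, IsUnit.of_mul_eq_one_right _ hb, hb⟩
end

section
/- Let p be a prime, (E,†) a finite-dimensional semisimple ℚ_p-algebra with involution, and R ⊂ E a †-stable order. Let d = dim_{ℚ_p} E and, for x ∈ E, let |det(L_x)|_p denote the p-adic absolute value of the determinant of left multiplication by x on E. Then there exists a constant c_p > 0, depending only on (R,†), such that: for every q ∈ R, if there exists a ∈ E with a†·q·a ∈ ℚ_p^×, then there exists b ∈ R such that b†·q·b ∈ ℤ_p \ {0} and |det(L_q)|_p^{d−1} ≤ c_p·|det(L_b)|_p². (With the local norm Nm(x) = |det(L_x)|_p^{−1} of rank d, this inequality expresses Nm(b) ≤ c_p'·Nm(q)^{(d−1)/2};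 it is the regular-representation instance of the paper's local bound, proved via the p-adic polar decomposition of Benoist–Oh.) -/
/-!
After a choice of `ℤ_p`-basis of `R`, the algebra `E` carries a norm with unit ball `R`, for which
`†` is an isometry. If `a† q a = m` is a nonzero scalar, then `q` is a self-adjoint unit.

The trace form `tr L_{xy}` is nondegenerate because `E` is semisimple (`trForm_injective`); hence
`det L_x = det L_{x†}` (`det_dag`), and any `x` for which all `det L_{1 + j x r}`, `r ∈ R`, are
bounded by `2` lies in a fixed ball (`exists_trace_bound`).

Let `k` be least with `p^{2k} q⁻¹ ∈ R`. The adjugate formula gives `|det L_q| ≤ C p^{-2k}`. The set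
of `b` with `p^k b ∈ R` and `b† q b ∈ R` contains `1`; choose `b` in it with `|det L_b|` almost
maximal. If `b (1 + j x r)` stays in this set for all `r ∈ R` and `j ∈ ℕ`, then `x` lies in a fixed
ball. Applied to `x = p^k b⁻¹ q⁻¹`, and then to `x = p^s w⁻¹` for `w = b† q b` and a suitable `s`,
this shows that `w⁻¹` is bounded independently of `q` (`exists_midpoint`). This replaces the polar
decomposition: `b R` is a midpoint between the lattices `R` and `q⁻¹ R`.

Such `w` range over a compact set of self-adjoint units, on which the action `w ↦ c† w c` has open
orbits, so those representing a scalar do so by some `a₁` and `m₁` in a bounded range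
(`exists_orbit_bound`). Then `p^{k+s} b a₁`, with `s` a constant, is the required element: it
represents `n = p^{2k+2s} m₁`, whose absolute value is at least a constant times `|det L_q|`, and
taking determinants gives `|det L_b|² |det L_q| = |n|^d`.
-/

namespace PolarBound

open LinearMap Module

/-! ### The regular representation of a semisimple algebra -/

section Algebraic

variable {K E : Type*} [Field K] [Ring E] [Algebra K E]

/-- The bilinear form `(x, y) ↦ tr L_{xy}` of the regular representation. -/
noncomputable def trForm (K E : Type*) [Field K] [Ring E] [Algebra K E] : E →ₗ[K] E →ₗ[K] K :=
  ((LinearMap.mul K E).compr₂ (trace K E ∘ₗ (Algebra.lmul K E).toLinearMap))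

lemma trForm_apply (x y : E) : trForm K E x y = trace K E (mulLeft K (x * y)) := rfl

lemma trForm_comm (x y : E) : trForm K E x y = trForm K E y x := by
  rw [trForm_apply, trForm_apply, mulLeft_mul, mulLeft_mul]
  exact trace_mul_comm K _ _

/-- Semisimplicity makes the trace form nondegenerate: its radical is a left ideal, hence generated
by an idempotent `e`, and `tr L_e` is the rank of `L_e`. -/
lemma trForm_injective [CharZero K] [FiniteDimensional K E] [IsSemisimpleRing E] : Function.Injective (trForm K E) := by
  rw [injective_iff_map_eq_zero]
  intro x hx
  let I : Ideal E :=
    { carrier := {x | ∀ y, trForm K E x y = 0}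
      add_mem' := fun {a b} ha hb y => by simp [ha y, hb y]
      zero_mem' := fun y => by simp
      smul_mem' := fun c a ha y => by
        have := ha (y * c)
        rw [trForm_comm, trForm_apply] at this ⊢
        rwa [smul_eq_mul, ← mul_assoc] }
  obtain ⟨e, he, hI⟩ := IsSemisimpleRing.ideal_eq_span_idempotent I
  have heI : e ∈ I := hI ▸ Ideal.mem_span_singleton_self e
  have htr : trace K E (mulLeft K e) = 0 := by
    have := heI e
    rwa [trForm_apply, he.eq] at this
  have hid : IsIdempotentElem (mulLeft K e) := by
    rw [IsIdempotentElem, Module.End.mul_eq_comp, ← mulLeft_mul, he.eq]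
  rw [(LinearMap.IsIdempotentElem.isProj_range _ hid).trace, Nat.cast_eq_zero,
    Submodule.finrank_eq_zero, LinearMap.range_eq_bot] at htr
  have he0 : e = 0 := by simpa using LinearMap.congr_fun htr 1
  have hxI : x ∈ I := fun y => by simp [hx]
  rw [hI, he0] at hxI
  simpa using hxI

/-- Left and right multiplication by `b` are adjoint for the trace form, so their determinants
agree. -/
lemma det_mulRight [CharZero K] [FiniteDimensional K E] [IsSemisimpleRing E] (b : E) :
    LinearMap.det (mulRight K b) = LinearMap.det (mulLeft K b) := by
  let e : E ≃ₗ[K] Dual K E :=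
    LinearEquiv.ofInjectiveOfFinrankEq (trForm K E) trForm_injective
      (Subspace.dual_finrank_eq (K := K) (V := E)).symm
  have he : ∀ x y, e x y = trForm K E x y := fun x y => rfl
  rw [← det_dualMap (mulLeft K b), ← det_conj (mulRight K b) e]
  congr 1
  ext f y
  obtain ⟨x, rfl⟩ := e.surjective f
  simp only [LinearMap.comp_apply, LinearEquiv.coe_coe, LinearEquiv.symm_apply_apply,
    LinearMap.dualMap_apply, he, mulRight_apply, mulLeft_apply, trForm_apply, mul_assoc]

/-- An anti-automorphism preserves the determinant of the regular representation. -/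
lemma det_dag [CharZero K] [FiniteDimensional K E] [IsSemisimpleRing E]
    (dag : E →ₗ[K] E) (hmul : ∀ x y, dag (x * y) = dag y * dag x)
    (hinv : ∀ x, dag (dag x) = x) (b : E) :
    LinearMap.det (mulLeft K (dag b)) = LinearMap.det (mulLeft K b) := by
  let e : E ≃ₗ[K] E := LinearEquiv.ofInvolutive dag hinv
  have he : ∀ x, e x = dag x := fun x => rfl
  have he' : ∀ x, e.symm x = dag x := fun x => rfl
  rw [← det_mulRight b, ← det_conj (mulRight K b) e]
  congr 1
  ext y
  simp [he, he', hmul, hinv]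

lemma det_mul (x y : E) : LinearMap.det (mulLeft K (x * y)) =
    LinearMap.det (mulLeft K x) * LinearMap.det (mulLeft K y) := by
  rw [mulLeft_mul, LinearMap.det_comp]

lemma det_algebraMap [FiniteDimensional K E] (m : K) :
    LinearMap.det (mulLeft K (algebraMap K E m)) = m ^ finrank K E := by
  have : mulLeft K (algebraMap K E m) = m • LinearMap.id := by
    ext x; simp [Algebra.smul_def]
  rw [this, LinearMap.det_smul, LinearMap.det_id, mul_one]

/-- Finite dimensionality turns a one-sided inverse into a two-sided one. -/
lemma mul_comm_one (K : Type*) {E : Type*} [Field K] [Ring E] [Algebra K E]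
    [FiniteDimensional K E] {x y : E} (h : x * y = 1) : y * x = 1 := by
  have : IsNoetherianRing E := isNoetherian_of_tower K inferInstance
  exact mul_eq_one_comm.mp h

lemma exists_inv_of_det_ne_zero [FiniteDimensional K E] {x : E} (h : LinearMap.det (mulLeft K x) ≠ 0) :
    ∃ y, x * y = 1 ∧ y * x = 1 := by
  have hu : IsUnit (mulLeft K x) := (LinearMap.isUnit_iff_isUnit_det _).2 (isUnit_iff_ne_zero.2 h)
  obtain ⟨y, hy⟩ := ((Module.End.isUnit_iff _).1 hu).2 1
  exact ⟨y, hy, mul_comm_one K hy⟩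

lemma det_ne_zero_of_mul_eq_one {x y : E} (h : x * y = 1) :
    LinearMap.det (mulLeft K x) ≠ 0 := by
  have := det_mul (K := K) x y
  rw [h, mulLeft_one, LinearMap.det_id] at this
  exact left_ne_zero_of_mul (this ▸ one_ne_zero)

/-- `tr L_x` is the linear coefficient of `z ↦ det L_{1 + z x}`, so it is recovered by Lagrange
interpolation at `0, …, d` with weights `l j` independent of `x`. -/
lemma exists_trace_interp (K E : Type*) [Field K] [CharZero K] [Ring E] [Algebra K E]
    [FiniteDimensional K E] : ∃ l : ℕ → K, ∀ x : E,
    trace K E (mulLeft K x) = ∑ j ∈ Finset.range (finrank K E + 1),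
      LinearMap.det (mulLeft K (1 + (j : K) • x)) * l j := by
  classical
  set d := finrank K E
  let v : ℕ → K := fun j => (j : K)
  refine ⟨fun j => (Lagrange.basis (Finset.range (d + 1)) v j).coeff 1, fun x => ?_⟩
  let b := Module.finBasis K E
  let M := LinearMap.toMatrix b b (mulLeft K x)
  let P : Polynomial K := (1 + (Polynomial.X : Polynomial K) • M.map Polynomial.C).det
  have hP : P.natDegree ≤ d := by
    have := Polynomial.natDegree_det_X_add_C_le M 1
    rw [Fintype.card_fin] at this
    rwa [Matrix.map_one _ Polynomial.C_0 Polynomial.C_1, add_comm] at this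
  have heval : ∀ z : K, P.eval z = LinearMap.det (mulLeft K (1 + z • x)) := by
    intro z
    rw [← LinearMap.det_toMatrix b, ← Polynomial.coe_evalRingHom, RingHom.map_det]
    congr 1
    have : mulLeft K (1 + z • x) = LinearMap.id + z • mulLeft K x := by
      ext y; simp [add_mul]
    rw [this, map_add (toMatrix b b), map_smul (toMatrix b b), LinearMap.toMatrix_id]
    ext i j
    simp only [RingHom.mapMatrix_apply, Matrix.map_apply, Matrix.add_apply, Matrix.smul_apply,
      map_add, smul_eq_mul, Polynomial.coe_evalRingHom, Matrix.one_apply]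
    split_ifs <;> simp [M] <;> exact mul_comm _ _
  have htr : P.coeff 1 = trace K E (mulLeft K x) := by
    rw [Matrix.coeff_det_one_add_X_smul_one, LinearMap.trace_eq_matrix_trace K b]
  have hinj : Set.InjOn v (Finset.range (d + 1)) := fun a _ c _ h => Nat.cast_injective h
  have hdeg : P.degree < (Finset.range (d + 1)).card := by
    rw [Finset.card_range]
    exact lt_of_le_of_lt Polynomial.degree_le_natDegree (by exact_mod_cast Nat.lt_succ_of_le hP)
  rw [← htr, Lagrange.eq_interpolate hinj hdeg, Lagrange.interpolate_apply,
    Polynomial.finsetSum_coeff]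
  refine Finset.sum_congr rfl fun j _ => ?_
  rw [Polynomial.coeff_C_mul, heval]

end Algebraic

/-! ### Normed algebras whose order is the unit ball -/

section Analytic

variable {p : ℕ} [Fact p.Prime] {E : Type*} [NormedRing E] [NormedAlgebra ℚ_[p] E]

lemma norm_pow_smul_anti (x : E) {m n : ℕ} (h : m ≤ n) (hx : ‖(p : ℚ_[p]) ^ m • x‖ ≤ 1) :
    ‖(p : ℚ_[p]) ^ n • x‖ ≤ 1 := by
  obtain ⟨k, rfl⟩ := Nat.exists_eq_add_of_le' h
  rw [pow_add, mul_smul, norm_smul]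
  refine mul_le_one₀ ?_ (norm_nonneg _) hx
  rw [norm_pow]
  exact pow_le_one₀ (norm_nonneg _) Padic.norm_p_lt_one.le

lemma exists_scale (p : ℕ) [Fact p.Prime] {E : Type*} [NormedRing E] [NormedAlgebra ℚ_[p] E]
    (B : ℝ) : ∃ N : ℕ, ∀ x : E, ‖x‖ ≤ B → ‖(p : ℚ_[p]) ^ N • x‖ ≤ 1 := by
  obtain ⟨N, hN⟩ := exists_pow_lt_of_lt_one (show (0 : ℝ) < (|B| + 1)⁻¹ by positivity)
    (Padic.norm_p_lt_one (p := p))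
  refine ⟨N, fun x hx => ?_⟩
  rw [norm_smul, norm_pow]
  calc _ ≤ (|B| + 1)⁻¹ * (|B| + 1) := by
        gcongr
        linarith [le_abs_self B]
    _ = 1 := inv_mul_cancel₀ (by positivity)

variable [FiniteDimensional ℚ_[p] E]

lemma continuous_leftMulMatrix {ι : Type*} [Fintype ι] [DecidableEq ι] (b : Basis ι ℚ_[p] E) :
    Continuous fun x : E => Algebra.leftMulMatrix b x :=
  LinearMap.continuous_of_finiteDimensional (Algebra.leftMulMatrix b).toLinearMap

lemma continuous_det_mulLeft : Continuous fun x : E => LinearMap.det (mulLeft ℚ_[p] x) := by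
  have h : (fun x : E => LinearMap.det (mulLeft ℚ_[p] x)) =
      fun x => (Algebra.leftMulMatrix (Module.finBasis ℚ_[p] E) x).det := by
    ext x
    rw [← LinearMap.det_toMatrix (Module.finBasis ℚ_[p] E)]
    rfl
  rw [h]
  exact (continuous_leftMulMatrix _).matrix_det

lemma exists_bound_of_continuous (p : ℕ) [Fact p.Prime] {E : Type*} [NormedRing E]
    [NormedAlgebra ℚ_[p] E] [FiniteDimensional ℚ_[p] E] {F : Type*} [NormedAddCommGroup F] {f : E → F}
    (hf : Continuous f) (r : ℝ) : ∃ B : ℝ, 0 < B ∧ ∀ x : E, ‖x‖ ≤ r → ‖f x‖ ≤ B := by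
  have : ProperSpace E := FiniteDimensional.proper ℚ_[p] E
  obtain ⟨B, hB⟩ := (isCompact_closedBall (0 : E) r).exists_bound_of_continuousOn hf.continuousOn
  exact ⟨|B| + 1, by positivity, fun x hx => (hB x (by simpa using hx)).trans
    (by linarith [le_abs_self B])⟩

/-- On the unit ball, `det L_q • q⁻¹` is bounded: it is a polynomial in `q`, by the adjugate
formula. -/
lemma exists_inv_bound (p : ℕ) [Fact p.Prime] (E : Type*) [NormedRing E] [NormedAlgebra ℚ_[p] E]
    [FiniteDimensional ℚ_[p] E] : ∃ B : ℝ, 0 < B ∧ ∀ q q' : E, ‖q‖ ≤ 1 → q * q' = 1 →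
    ‖LinearMap.det (mulLeft ℚ_[p] q)‖ * ‖q'‖ ≤ B := by
  let b := Module.finBasis ℚ_[p] E
  let f : E → E := fun q =>
    b.equivFun.symm ((Algebra.leftMulMatrix b q).adjugate.mulVec (b.equivFun 1))
  have hf : Continuous f := by
    have h1 : Continuous b.equivFun.symm :=
      LinearMap.continuous_of_finiteDimensional b.equivFun.symm.toLinearMap
    exact h1.comp ((continuous_leftMulMatrix b).matrix_adjugate.matrix_mulVec continuous_const)
  have key : ∀ q, q * f q = algebraMap ℚ_[p] E (LinearMap.det (mulLeft ℚ_[p] q)) := by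
    intro q
    apply b.equivFun.injective
    have h2 : b.equivFun (q * f q) = (Algebra.leftMulMatrix b q).mulVec (b.equivFun (f q)) :=
      (LinearMap.toMatrix_mulVec_repr b b (mulLeft ℚ_[p] q) (f q)).symm
    rw [h2, LinearEquiv.apply_symm_apply, Matrix.mulVec_mulVec, Matrix.mul_adjugate,
      Matrix.smul_mulVec, Matrix.one_mulVec, Algebra.algebraMap_eq_smul_one, map_smul,
      ← LinearMap.det_toMatrix b]
    rfl
  obtain ⟨B, hB0, hB⟩ := exists_bound_of_continuous p hf 1
  refine ⟨B, hB0, fun q q' hq hqq' => ?_⟩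
  have h3 : f q = LinearMap.det (mulLeft ℚ_[p] q) • q' := by
    have h4 := mul_comm_one ℚ_[p] hqq'
    calc f q = q' * (q * f q) := by rw [← mul_assoc, h4, one_mul]
      _ = _ := by rw [key, Algebra.algebraMap_eq_smul_one, mul_smul_comm, mul_one]
  rw [← norm_smul, ← h3]
  exact hB q hq

/-- If all `1 + j x r` have determinant bounded by `2`, then so is, up to a constant, `tr L_{xr}`
for every `r` in the unit ball; by nondegeneracy of the trace form `x` lies in a fixed ball. -/
lemma exists_trace_bound (p : ℕ) [Fact p.Prime] (E : Type*) [NormedRing E] [NormedAlgebra ℚ_[p] E]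
    [FiniteDimensional ℚ_[p] E] [IsSemisimpleRing E] : ∃ C : ℕ, ∀ x : E,
    (∀ r : E, ‖r‖ ≤ 1 → ∀ j : ℕ,
      ‖LinearMap.det (mulLeft ℚ_[p] (1 + (j : ℚ_[p]) • (x * r)))‖ ≤ 2) →
    ‖(p : ℚ_[p]) ^ C • x‖ ≤ 1 := by
  obtain ⟨l, hl⟩ := exists_trace_interp ℚ_[p] E
  let b := Module.finBasis ℚ_[p] E
  let φ : E →ₗ[ℚ_[p]] (Fin (finrank ℚ_[p] E) → ℚ_[p]) :=
    LinearMap.pi fun i => (trForm ℚ_[p] E).flip (b i)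
  have hφ : Function.Injective φ := by
    rw [injective_iff_map_eq_zero]
    intro x hx
    apply trForm_injective (K := ℚ_[p])
    rw [map_zero]
    exact b.ext fun i => (congrFun hx i : _)
  obtain ⟨A, -, hA⟩ := φ.injective_iff_antilipschitz.1 hφ
  obtain ⟨N, hN⟩ := exists_scale p (E := E) (∑ i, ‖b i‖)
  have hb : ∀ i, ‖(p : ℚ_[p]) ^ N • b i‖ ≤ 1 := fun i =>
    hN _ (Finset.single_le_sum (f := fun i => ‖b i‖) (fun _ _ => norm_nonneg _)
      (Finset.mem_univ i))
  let T : ℝ := ∑ j ∈ Finset.range (finrank ℚ_[p] E + 1), 2 * ‖l j‖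
  have hT : 0 ≤ T := Finset.sum_nonneg fun _ _ => by positivity
  obtain ⟨C, hC⟩ := exists_scale p (E := E) (A * (‖((p : ℚ_[p]) ^ N)‖⁻¹ * T))
  refine ⟨C, fun x hx => hC x ?_⟩
  have hpN : (p : ℚ_[p]) ^ N ≠ 0 := pow_ne_zero _ (by exact_mod_cast (Fact.out : p.Prime).ne_zero)
  have h1 : ∀ i, ‖φ x i‖ ≤ ‖((p : ℚ_[p]) ^ N)‖⁻¹ * T := by
    intro i
    have h2 : ‖(p : ℚ_[p]) ^ N * φ x i‖ ≤ T := by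
      have h3 : (p : ℚ_[p]) ^ N * φ x i
          = trace ℚ_[p] E (mulLeft ℚ_[p] (x * ((p : ℚ_[p]) ^ N • b i))) := by
        rw [← trForm_apply, map_smul]
        rfl
      rw [h3, hl]
      refine (norm_sum_le _ _).trans (Finset.sum_le_sum fun j _ => ?_)
      rw [norm_mul]
      gcongr
      exact hx _ (hb i) j
    rw [norm_mul] at h2
    rwa [le_inv_mul_iff₀ (norm_pos_iff.2 hpN)]
  have h4 : ‖φ x‖ ≤ ‖((p : ℚ_[p]) ^ N)‖⁻¹ * T := (pi_norm_le_iff_of_nonneg (by positivity)).2 h1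
  have h5 := hA.le_mul_dist x 0
  rw [map_zero, dist_zero_right, dist_zero_right] at h5
  exact h5.trans (by gcongr)

/-- The midpoint argument. For `q` self-adjoint with `p^{2k} q⁻¹` in the unit ball, there is `b` with
`p^k b` in the unit ball such that `b† q b` lies in the unit ball and has inverse bounded
independently of `q`: one takes `b` almost maximizing `|det L_b|` under these constraints. -/
lemma exists_midpoint (p : ℕ) [Fact p.Prime] (E : Type*) [NormedRing E] [NormedAlgebra ℚ_[p] E]
    [FiniteDimensional ℚ_[p] E] [IsSemisimpleRing E]
    (hadd : ∀ x y : E, ‖x‖ ≤ 1 → ‖y‖ ≤ 1 → ‖x + y‖ ≤ 1) (hone : ‖(1 : E)‖ ≤ 1)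
    (dag : E →ₗ[ℚ_[p]] E) (hmul : ∀ x y, dag (x * y) = dag y * dag x)
    (hinv : ∀ x, dag (dag x) = x) (hnorm : ∀ x, ‖dag x‖ = ‖x‖) :
    ∃ C : ℕ, ∀ (q q' : E) (k : ℕ), q * q' = 1 → dag q = q → ‖q‖ ≤ 1 →
      ‖(p : ℚ_[p]) ^ (2 * k) • q'‖ ≤ 1 →
      ∃ b b' : E, b * b' = 1 ∧ ‖(p : ℚ_[p]) ^ k • b‖ ≤ 1 ∧ ‖dag b * q * b‖ ≤ 1 ∧
        ‖(p : ℚ_[p]) ^ C • (b' * q' * dag b')‖ ≤ 1 := by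
  obtain ⟨C, hC⟩ := exists_trace_bound p E
  refine ⟨2 * C + 1, fun q q' k hqq' hq hq1 hk => ?_⟩
  have hq'q : q' * q = 1 := mul_comm_one ℚ_[p] hqq'
  have hd1 : dag 1 = 1 := by
    have := hmul 1 (dag 1)
    rwa [one_mul, hinv, one_mul, eq_comm] at this
  have hq' : dag q' = q' := by
    have h1 : dag q' * q = 1 := by
      conv_lhs => rw [← hq]
      rw [← hmul, hqq', hd1]
    calc dag q' = dag q' * (q * q') := by rw [hqq', mul_one]
      _ = q' := by rw [← mul_assoc, h1, one_mul]
  have hp1 : ∀ n : ℕ, ‖(p : ℚ_[p]) ^ n‖ ≤ 1 := fun n => by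
    rw [norm_pow]
    exact pow_le_one₀ (norm_nonneg _) Padic.norm_p_lt_one.le
  have hpk0 : (p : ℚ_[p]) ^ k ≠ 0 := pow_ne_zero _ (by exact_mod_cast (Fact.out : p.Prime).ne_zero)
  have hsm : ∀ (z : ℚ_[p]) (x : E), ‖z‖ ≤ 1 → ‖x‖ ≤ 1 → ‖z • x‖ ≤ 1 := fun z x hz hx => by
    rw [norm_smul]; exact mul_le_one₀ hz (norm_nonneg _) hx
  have hml : ∀ x y : E, ‖x‖ ≤ 1 → ‖y‖ ≤ 1 → ‖x * y‖ ≤ 1 := fun x y hx hy =>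
    (norm_mul_le x y).trans (mul_le_one₀ hx (norm_nonneg _) hy)
  -- an almost maximizing `b`
  let S : Set E := {b | ‖(p : ℚ_[p]) ^ k • b‖ ≤ 1 ∧ ‖dag b * q * b‖ ≤ 1}
  let f : E → ℝ := fun b => ‖LinearMap.det (mulLeft ℚ_[p] b)‖
  have h1S : (1 : E) ∈ S := ⟨hsm _ _ (hp1 k) hone, by simpa [hd1] using hq1⟩
  have hbdd : BddAbove (f '' S) := by
    obtain ⟨B, -, hB⟩ := exists_bound_of_continuous p
      (continuous_det_mulLeft (p := p) (E := E)) ‖(p : ℚ_[p]) ^ k‖⁻¹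
    refine ⟨B, ?_⟩
    rintro _ ⟨b, hb, rfl⟩
    refine hB b ?_
    have := hb.1
    rw [norm_smul] at this
    rwa [← mul_one (‖(p : ℚ_[p]) ^ k‖⁻¹), le_inv_mul_iff₀ (norm_pos_iff.2 hpk0)]
  have hf1 : f 1 = 1 := by simp [f]
  have hsup : 1 ≤ sSup (f '' S) := hf1 ▸ le_csSup hbdd ⟨1, h1S, rfl⟩
  obtain ⟨_, ⟨b, hbS, rfl⟩, hb⟩ := exists_lt_of_lt_csSup (⟨_, 1, h1S, rfl⟩ : (f '' S).Nonempty)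
    (show sSup (f '' S) / 2 < sSup (f '' S) by linarith)
  have hmax : ∀ b₂ ∈ S, f b₂ ≤ 2 * f b := fun b₂ h => by
    have := le_csSup hbdd ⟨b₂, h, rfl⟩
    linarith
  have hb0 : 0 < f b := by linarith
  obtain ⟨b', hbb', hb'b⟩ := exists_inv_of_det_ne_zero (norm_pos_iff.1 hb0)
  set w := dag b * q * b with hw
  have hwd : dag w = w := by simp only [hw, hmul, hinv, hq, mul_assoc]
  have hdb : dag b' * dag b = 1 := by rw [← hmul, hbb', hd1]
  -- the constraints, and the near-maximality of `b`, confine `x`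
  have key : ∀ x, ‖(p : ℚ_[p]) ^ k • (b * x)‖ ≤ 1 → ‖w * x‖ ≤ 1 → ‖dag x * w * x‖ ≤ 1 →
      ‖(p : ℚ_[p]) ^ C • x‖ ≤ 1 := by
    intro x hx1 hx2 hx3
    refine hC x fun r hr j => ?_
    have hj : ‖(j : ℚ_[p])‖ ≤ 1 := by
      simpa using Padic.norm_int_le_one (p := p) (j : ℤ)
    have hr' : ‖dag r‖ ≤ 1 := (hnorm r).trans_le hr
    have hmem : b * (1 + (j : ℚ_[p]) • (x * r)) ∈ S := by
      constructor
      · have : (p : ℚ_[p]) ^ k • (b * (1 + (j : ℚ_[p]) • (x * r))) =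
            (p : ℚ_[p]) ^ k • b + (j : ℚ_[p]) • (((p : ℚ_[p]) ^ k • (b * x)) * r) := by
          simp only [mul_add, mul_one, smul_add, mul_smul_comm, smul_mul_assoc, mul_assoc]
          rw [smul_comm]
        rw [this]
        exact hadd _ _ hbS.1 (hsm _ _ hj (hml _ _ hx1 hr))
      · have : dag (b * (1 + (j : ℚ_[p]) • (x * r))) * q * (b * (1 + (j : ℚ_[p]) • (x * r))) =
            w + (j : ℚ_[p]) • ((w * x) * r) + ((j : ℚ_[p]) • (dag r * dag (w * x))
              + (j : ℚ_[p]) • (j : ℚ_[p]) • (dag r * (dag x * w * x) * r)) := by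
          rw [hmul w x, hwd, hw]
          simp only [hmul, map_add, map_smul, mul_add, add_mul, mul_one, smul_add, mul_smul_comm,
            smul_mul_assoc, mul_assoc]
          abel
        rw [this]
        have hx2' : ‖dag (w * x)‖ ≤ 1 := (hnorm _).trans_le hx2
        exact hadd _ _ (hadd _ _ hbS.2 (hsm _ _ hj (hml _ _ hx2 hr)))
          (hadd _ _ (hsm _ _ hj (hml _ _ hr' hx2'))
            (hsm _ _ hj (hsm _ _ hj (hml _ _ (hml _ _ hr' hx3) hr))))
    have h2 := hmax _ hmem
    simp only [f, det_mul, norm_mul] at h2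
    rw [mul_comm 2] at h2
    exact le_of_mul_le_mul_left h2 hb0
  -- first use: `p^k q⁻¹` lies almost in `b R`
  have step1 : ‖(p : ℚ_[p]) ^ (C + k) • (q' * dag b')‖ ≤ 1 := by
    have hbx : b * (b' * q') = q' := by rw [← mul_assoc, hbb', one_mul]
    have hwx : w * (b' * q') = dag b := by
      rw [hw, mul_assoc, hbx, mul_assoc, hqq', mul_one]
    have h := key ((p : ℚ_[p]) ^ k • (b' * q')) ?_ ?_ ?_
    · have h2 : ‖dag ((p : ℚ_[p]) ^ C • (p : ℚ_[p]) ^ k • (b' * q'))‖ ≤ 1 := (hnorm _).trans_le h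
      rwa [map_smul, map_smul, hmul, hq', smul_smul, ← pow_add] at h2
    · rwa [mul_smul_comm, hbx, smul_smul, ← pow_add, ← two_mul]
    · rw [mul_smul_comm, hwx, ← map_smul, hnorm]
      exact hbS.1
    · rw [mul_assoc, mul_smul_comm, hwx, map_smul, hmul, hq', smul_mul_smul_comm, mul_assoc, hdb,
        mul_one, ← pow_add, ← two_mul]
      exact hk
  refine ⟨b, b', hbb', hbS.1, hbS.2, ?_⟩
  set w' := b' * q' * dag b' with hw'
  have hw'd : dag w' = w' := by simp only [hw', hmul, hinv, hq', mul_assoc]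
  have hww' : w * w' = 1 := by
    rw [hw, hw']
    calc dag b * q * b * (b' * q' * dag b') = dag b * (q * ((b * b') * q')) * dag b' := by
          simp only [mul_assoc]
      _ = 1 := by rw [hbb', one_mul, hqq', mul_one, ← hmul, hb'b, hd1]
  -- second use: a large `w⁻¹` would allow `b` to be enlarged
  have hex : ∃ t : ℕ, ‖(p : ℚ_[p]) ^ t • w'‖ ≤ 1 := by
    obtain ⟨N, hN⟩ := exists_scale p (E := E) ‖w'‖
    exact ⟨N, hN _ le_rfl⟩
  classical
  by_contra hcon
  have ht1 : 2 * C + 1 < Nat.find hex := by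
    by_contra hlt
    exact hcon (norm_pow_smul_anti _ (not_lt.1 hlt) (Nat.find_spec hex))
  set t := Nat.find hex with ht
  set s := (t + 1) / 2 with hs
  have hwx : w * ((p : ℚ_[p]) ^ s • w') = (p : ℚ_[p]) ^ s • 1 := by rw [mul_smul_comm, hww']
  have h := key ((p : ℚ_[p]) ^ s • w') ?_ ?_ ?_
  · rw [smul_smul, ← pow_add] at h
    have := Nat.find_min' hex h
    omega
  · rw [mul_smul_comm, smul_smul, ← pow_add, hw', mul_assoc, ← mul_assoc b, hbb', one_mul]
    exact norm_pow_smul_anti _ (by omega) step1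
  · rw [hwx]
    exact hsm _ _ (hp1 s) hone
  · rw [mul_assoc, hwx, map_smul, hw'd, smul_mul_smul_comm, mul_one, ← pow_add]
    exact norm_pow_smul_anti _ (by omega) (Nat.find_spec hex)

/-- Openness of orbits. Among the self-adjoint `w` with `w` and `w⁻¹` bounded, those which represent
a scalar do so by bounded elements: such `w` form a compact set, and the orbits of
`w ↦ c† w c` on self-adjoint units are open by the inverse function theorem. -/
lemma exists_orbit_bound (p : ℕ) [Fact p.Prime] (E : Type*) [NormedRing E] [NormedAlgebra ℚ_[p] E]
    [FiniteDimensional ℚ_[p] E]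
    (dag : E →ₗ[ℚ_[p]] E) (hmul : ∀ x y, dag (x * y) = dag y * dag x)
    (hinv : ∀ x, dag (dag x) = x) (C : ℕ) :
    ∃ B : ℝ, 0 < B ∧ ∀ w w' : E, w * w' = 1 → dag w = w → ‖w‖ ≤ 1 →
      ‖(p : ℚ_[p]) ^ C • w'‖ ≤ 1 →
      (∃ (a : E) (m : ℚ_[p]), m ≠ 0 ∧ dag a * w * a = algebraMap ℚ_[p] E m) →
      ∃ (a : E) (m : ℚ_[p]), m ≠ 0 ∧ dag a * w * a = algebraMap ℚ_[p] E m ∧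
        ‖a‖ ≤ B ∧ ‖m‖ ≤ B ∧ ‖m‖⁻¹ ≤ B := by
  have : ProperSpace E := FiniteDimensional.proper ℚ_[p] E
  have : CompleteSpace E := FiniteDimensional.complete ℚ_[p] E
  have hd1 : dag 1 = 1 := by
    have := hmul 1 (dag 1)
    rwa [one_mul, hinv, one_mul, eq_comm] at this
  have hdc : Continuous dag := dag.continuous_of_finiteDimensional
  let Sym : Submodule ℚ_[p] E := LinearMap.ker (dag - LinearMap.id)
  have hSym : ∀ x, x ∈ Sym ↔ dag x = x := fun x => by simp [Sym, sub_eq_zero]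
  have : CompleteSpace Sym := FiniteDimensional.complete ℚ_[p] Sym
  have hpC0 : (p : ℚ_[p]) ^ C ≠ 0 := pow_ne_zero _ (by exact_mod_cast (Fact.out : p.Prime).ne_zero)
  -- the compact set of self-adjoint units under consideration
  let T : Set (E × E) := {x | x.1 * x.2 = 1 ∧ dag x.1 = x.1 ∧ ‖x.1‖ ≤ 1 ∧
    ‖(p : ℚ_[p]) ^ C • x.2‖ ≤ 1}
  have hTc : IsCompact T := by
    have hbd : T ⊆ Metric.closedBall (0 : E) 1 ×ˢ Metric.closedBall 0 ‖(p : ℚ_[p]) ^ C‖⁻¹ := by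
      rintro ⟨x, y⟩ ⟨-, -, hx, hy⟩
      rw [norm_smul] at hy
      refine ⟨by simpa using hx, ?_⟩
      rw [mem_closedBall_zero_iff, ← mul_one (‖(p : ℚ_[p]) ^ C‖⁻¹),
        le_inv_mul_iff₀ (norm_pos_iff.2 hpC0)]
      exact hy
    refine ((isCompact_closedBall _ _).prod (isCompact_closedBall _ _)).of_isClosed_subset ?_ hbd
    have c1 : IsClosed {x : E × E | x.1 * x.2 = 1} := isClosed_eq (by fun_prop) (by fun_prop)
    have c2 : IsClosed {x : E × E | dag x.1 = x.1} := isClosed_eq (by fun_prop) (by fun_prop)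
    have c3 : IsClosed {x : E × E | ‖x.1‖ ≤ 1} := isClosed_le (by fun_prop) (by fun_prop)
    have c4 : IsClosed {x : E × E | ‖(p : ℚ_[p]) ^ C • x.2‖ ≤ 1} :=
      isClosed_le (by fun_prop) (by fun_prop)
    exact c1.inter (c2.inter (c3.inter c4))
  let W : Set Sym := Subtype.val ⁻¹' (Prod.fst '' T)
  have hW : IsCompact W := by
    refine Topology.IsInducing.subtypeVal.isCompact_preimage_iff ?_ |>.2 (hTc.image continuous_fst)
    rintro _ ⟨x, hx, rfl⟩
    exact ⟨⟨x.1, (hSym _).2 hx.2.1⟩, rfl⟩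
  let P : Set Sym → Prop := fun s => ∃ B : ℝ, 0 < B ∧ ∀ w ∈ s,
      (∃ (a : E) (m : ℚ_[p]), m ≠ 0 ∧ dag a * w * a = algebraMap ℚ_[p] E m) →
      ∃ (a : E) (m : ℚ_[p]), m ≠ 0 ∧ dag a * w * a = algebraMap ℚ_[p] E m ∧
        ‖a‖ ≤ B ∧ ‖m‖ ≤ B ∧ ‖m‖⁻¹ ≤ B
  suffices hP : P W by
    obtain ⟨B, hB0, hB⟩ := hP
    exact ⟨B, hB0, fun w w' h1 h2 h3 h4 => hB ⟨w, (hSym w).2 h2⟩ ⟨(w, w'), ⟨h1, h2, h3, h4⟩, rfl⟩⟩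
  refine hW.induction_on (p := P) ⟨1, one_pos, by simp⟩ ?_ ?_ ?_
  · rintro s t hst ⟨B, hB0, hB⟩
    exact ⟨B, hB0, fun w hw => hB w (hst hw)⟩
  · rintro s t ⟨B, hB0, hB⟩ ⟨B', hB0', hB'⟩
    refine ⟨B + B', by positivity, fun w hw hex => ?_⟩
    rcases hw with hw | hw
    · obtain ⟨a, m, hm, h1, h2, h3, h4⟩ := hB w hw hex
      exact ⟨a, m, hm, h1, by linarith, by linarith, by linarith⟩
    · obtain ⟨a, m, hm, h1, h2, h3, h4⟩ := hB' w hw hex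
      exact ⟨a, m, hm, h1, by linarith, by linarith, by linarith⟩
  rintro w₀ ⟨⟨_, w₀'⟩, ⟨hw1, hw2, -, -⟩, rfl⟩
  simp only at hw1 hw2
  have hw1' := mul_comm_one ℚ_[p] hw1
  have hw2' : dag w₀' = w₀' := by
    have h1 : dag w₀' * (w₀ : E) = 1 := by
      conv_lhs => rw [← hw2]
      rw [← hmul, hw1, hd1]
    calc dag w₀' = dag w₀' * ((w₀ : E) * w₀') := by rw [hw1, mul_one]
      _ = w₀' := by rw [← mul_assoc, h1, one_mul]
  -- the orbit map and its derivative at `1`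
  let dagL : E →L[ℚ_[p]] E := LinearMap.toContinuousLinearMap dag
  let π : E →ₗ[ℚ_[p]] Sym := LinearMap.codRestrict Sym
    ((2 : ℚ_[p])⁻¹ • (LinearMap.id + dag)) (fun x => by
      rw [hSym]; simp [hinv, add_comm])
  let πL : E →L[ℚ_[p]] Sym := LinearMap.toContinuousLinearMap π
  have hπ : ∀ x, dag x = x → (π x : E) = x := fun x hx => by
    simp only [π, LinearMap.codRestrict_apply, LinearMap.smul_apply, LinearMap.add_apply,
      LinearMap.id_apply, hx]
    rw [← two_smul ℚ_[p] x, smul_smul, inv_mul_cancel₀ two_ne_zero, one_smul]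
  have hsym : ∀ c : E, dag (dag c * w₀ * c) = dag c * w₀ * c := fun c => by
    simp only [hmul, hinv, hw2, mul_assoc]
  let F : E → Sym := fun c => πL ((dagL c * w₀) * c)
  have hF : ∀ c, (F c : E) = dag c * w₀ * c := fun c => hπ _ (hsym c)
  have hF1 : F 1 = w₀ := Subtype.ext (by rw [hF, hd1, one_mul, mul_one])
  have hprod := ((dagL.hasStrictFDerivAt (x := 1)).mul_const' (w₀ : E)).mul'
      (hasStrictFDerivAt_id (𝕜 := ℚ_[p]) (1 : E))
  have hderiv := HasStrictFDerivAt.comp (1 : E) πL.hasStrictFDerivAt hprod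
  have hmap : Filter.map F (nhds 1) = nhds (F 1) := by
    refine hderiv.map_nhds_eq_of_surj ?_
    rw [LinearMap.range_eq_top]
    intro y
    have hy : dag (y : E) = y := (hSym _).1 y.2
    refine ⟨(2 : ℚ_[p])⁻¹ • (w₀' * y), Subtype.ext ?_⟩
    have e1 : dag (w₀' * (y : E)) * w₀ = y := by rw [hmul, hy, hw2', mul_assoc, hw1', mul_one]
    have e2 : (w₀ : E) * (w₀' * y) = y := by rw [← mul_assoc, hw1, one_mul]
    have e3 : (2 : ℚ_[p])⁻¹ • (y : E) + (2 : ℚ_[p])⁻¹ • (y : E) = y := by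
      rw [← add_smul, ← two_mul, mul_inv_cancel₀ two_ne_zero, one_smul]
    refine (congrArg (fun z => (π z : E)) (?_ : _ = (y : E))).trans (hπ _ hy)
    simp [dagL, hd1, e1, e2, e3]
  let N : Set E := {c | ∃ c', c * c' = 1 ∧ ‖c'‖ ≤ ‖(1 : E)‖ + 1}
  have hN : N ∈ nhds (1 : E) := by
    have h1 : ∀ᶠ c in nhds (1 : E), IsUnit c := Units.nhds (1 : Eˣ)
    have h2 : ContinuousAt Ring.inverse (1 : E) := NormedRing.inverse_continuousAt (1 : Eˣ)
    have h3 : ∀ᶠ c in nhds (1 : E), ‖Ring.inverse c‖ < ‖(1 : E)‖ + 1 :=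
      h2.norm.eventually_lt_const (by simp)
    filter_upwards [h1, h3] with c hc hc'
    exact ⟨Ring.inverse c, Ring.mul_inverse_cancel c hc, hc'.le⟩
  have hFN : F '' N ∈ nhds w₀ := by
    rw [← hF1, ← hmap]
    exact Filter.image_mem_map hN
  refine ⟨F '' N, mem_nhdsWithin_of_mem_nhds hFN, ?_⟩
  by_cases hex : ∃ (a : E) (m : ℚ_[p]), m ≠ 0 ∧ dag a * w₀ * a = algebraMap ℚ_[p] E m
  · obtain ⟨a, m, hm, ham⟩ := hex
    refine ⟨(‖(1 : E)‖ + 1) * ‖a‖ + ‖m‖ + ‖m‖⁻¹ + 1, by positivity, ?_⟩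
    rintro _ ⟨c, ⟨c', hcc', hc'⟩, rfl⟩ -
    have hm' : 0 ≤ ‖m‖⁻¹ := by positivity
    have ha' : 0 ≤ (‖(1 : E)‖ + 1) * ‖a‖ := by positivity
    refine ⟨c' * a, m, hm, ?_, ?_, by linarith [norm_nonneg m], by linarith [norm_nonneg m]⟩
    · rw [hF, ← ham]
      have hdd : dag c' * dag c = 1 := by rw [← hmul, hcc', hd1]
      calc dag (c' * a) * (dag c * w₀ * c) * (c' * a)
          = dag a * (dag c' * dag c) * w₀ * ((c * c') * a) := by simp only [hmul, mul_assoc]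
        _ = dag a * w₀ * a := by rw [hdd, hcc', mul_one, one_mul]
    · have : ‖c' * a‖ ≤ (‖(1 : E)‖ + 1) * ‖a‖ := (norm_mul_le _ _).trans (by gcongr)
      linarith [norm_nonneg m]
  · refine ⟨1, one_pos, ?_⟩
    rintro _ ⟨c, -, rfl⟩ ⟨a, m, hm, ham⟩
    refine absurd ⟨c * a, m, hm, ?_⟩ hex
    rw [← ham, hF, hmul]
    simp only [mul_assoc]

/-- The bound for a normed algebra, the order being the unit ball. -/
lemma exists_bound_normed (p : ℕ) [Fact p.Prime] (E : Type*) [NormedRing E]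
    [NormedAlgebra ℚ_[p] E] [FiniteDimensional ℚ_[p] E] [IsSemisimpleRing E]
    (hadd : ∀ x y : E, ‖x‖ ≤ 1 → ‖y‖ ≤ 1 → ‖x + y‖ ≤ 1) (hone : ‖(1 : E)‖ ≤ 1)
    (dag : E →ₗ[ℚ_[p]] E) (hmul : ∀ x y, dag (x * y) = dag y * dag x)
    (hinv : ∀ x, dag (dag x) = x) (hnorm : ∀ x, ‖dag x‖ = ‖x‖) :
    ∃ c : ℝ, 0 < c ∧ ∀ q : E, ‖q‖ ≤ 1 →
      (∃ (a : E) (m : ℚ_[p]), m ≠ 0 ∧ dag a * q * a = algebraMap ℚ_[p] E m) →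
      ∃ b : E, ‖b‖ ≤ 1 ∧
        (∃ n : ℚ_[p], n ≠ 0 ∧ ‖n‖ ≤ 1 ∧ dag b * q * b = algebraMap ℚ_[p] E n) ∧
        ‖LinearMap.det (mulLeft ℚ_[p] q)‖ ^ (finrank ℚ_[p] E - 1) ≤
          c * ‖LinearMap.det (mulLeft ℚ_[p] b)‖ ^ 2 := by
  obtain ⟨C, hC⟩ := exists_midpoint p E hadd hone dag hmul hinv hnorm
  obtain ⟨B, hB0, hB⟩ := exists_orbit_bound p E dag hmul hinv C
  obtain ⟨B₁, hB₁0, hB₁⟩ := exists_inv_bound p E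
  obtain ⟨B₂, hB₂0, hB₂⟩ := exists_bound_of_continuous p
    (continuous_det_mulLeft (p := p) (E := E)) 1
  obtain ⟨s₁, hs₁⟩ := exists_scale p (E := E) B
  obtain ⟨s₂, hs₂⟩ := exists_scale p (E := ℚ_[p]) B
  set s := max s₁ s₂
  set d := finrank ℚ_[p] E with hd
  have hP0 : (p : ℚ_[p]) ≠ 0 := by exact_mod_cast (Fact.out : p.Prime).ne_zero
  have hp0 : ∀ n : ℕ, (p : ℚ_[p]) ^ n ≠ 0 := fun n => pow_ne_zero _ hP0
  have hp0' : ∀ n : ℕ, 0 < ‖(p : ℚ_[p]) ^ n‖ := fun n => norm_pos_iff.2 (hp0 n)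
  have hp1 : ∀ n : ℕ, ‖(p : ℚ_[p]) ^ n‖ ≤ 1 := fun n => by
    rw [norm_pow]
    exact pow_le_one₀ (norm_nonneg _) Padic.norm_p_lt_one.le
  let C₄ : ℝ := B₂ + B₁ * ‖(p : ℚ_[p]) ^ 2‖⁻¹
  have hC₄ : 0 < C₄ := by have := hp0' 2; positivity
  let c₀ : ℝ := C₄ * B * ‖(p : ℚ_[p]) ^ (2 * s)‖⁻¹
  have hc₀ : 0 < c₀ := by have := hp0' (2 * s); positivity
  refine ⟨c₀ ^ d, by positivity, ?_⟩
  rintro q hq1 ⟨a, m, hm, ham⟩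
  have hd1 : dag 1 = 1 := by
    have := hmul 1 (dag 1)
    rwa [one_mul, hinv, one_mul, eq_comm] at this
  -- `q` is a self-adjoint unit
  set a' := m⁻¹ • (dag a * q) with ha'
  have ha'a : a' * a = 1 := by
    rw [ha', smul_mul_assoc, ham, Algebra.algebraMap_eq_smul_one, smul_smul, inv_mul_cancel₀ hm,
      one_smul]
  have haa' : a * a' = 1 := mul_comm_one ℚ_[p] ha'a
  have hdaa' : dag a' * dag a = 1 := by rw [← hmul, haa', hd1]
  have hqa : q = m • (dag a' * a') := by
    rw [ha', mul_smul_comm, smul_smul, mul_inv_cancel₀ hm, one_smul, ← mul_assoc, ← ha', hdaa',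
      one_mul]
  have hqd : dag q = q := by rw [hqa, map_smul, hmul, hinv]
  set q' := m⁻¹ • (a * dag a) with hq'
  have hqq' : q * q' = 1 := by
    rw [hqa, hq', smul_mul_smul_comm, mul_inv_cancel₀ hm, one_smul, mul_assoc, ← mul_assoc a',
      ha'a, one_mul, hdaa']
  have hDq : 0 < ‖LinearMap.det (mulLeft ℚ_[p] q)‖ :=
    norm_pos_iff.2 (det_ne_zero_of_mul_eq_one hqq')
  -- the least `k` with `p^{2k} q⁻¹` integral satisfies `|det L_q| ≤ C₄ p^{-2k}`
  have hex : ∃ k : ℕ, ‖(p : ℚ_[p]) ^ (2 * k) • q'‖ ≤ 1 := by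
    obtain ⟨N, hN⟩ := exists_scale p (E := E) ‖q'‖
    exact ⟨N, norm_pow_smul_anti _ (by omega) (hN _ le_rfl)⟩
  obtain ⟨k, hk, hkD⟩ : ∃ k : ℕ, ‖(p : ℚ_[p]) ^ (2 * k) • q'‖ ≤ 1 ∧
      ‖LinearMap.det (mulLeft ℚ_[p] q)‖ ≤ C₄ * ‖(p : ℚ_[p]) ^ (2 * k)‖ := by
    classical
    refine ⟨Nat.find hex, Nat.find_spec hex, ?_⟩
    rcases hk : Nat.find hex with _ | j
    · have h0 : 0 ≤ B₁ * ‖(p : ℚ_[p]) ^ 2‖⁻¹ := by positivity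
      simpa [C₄] using (hB₂ q hq1).trans (le_add_of_nonneg_right h0)
    · have hj := Nat.find_min hex (m := j) (by omega)
      rw [not_le, norm_smul] at hj
      have h2 := hB₁ q q' hq1 hqq'
      calc ‖LinearMap.det (mulLeft ℚ_[p] q)‖
          ≤ ‖LinearMap.det (mulLeft ℚ_[p] q)‖ * (‖(p : ℚ_[p]) ^ (2 * j)‖ * ‖q'‖) :=
            le_mul_of_one_le_right hDq.le hj.le
        _ = (‖LinearMap.det (mulLeft ℚ_[p] q)‖ * ‖q'‖) * ‖(p : ℚ_[p]) ^ (2 * j)‖ := by ring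
        _ ≤ B₁ * ‖(p : ℚ_[p]) ^ (2 * j)‖ := by gcongr
        _ = B₁ * ‖(p : ℚ_[p]) ^ 2‖⁻¹ * ‖(p : ℚ_[p]) ^ (2 * (j + 1))‖ := by
            have := (hp0' 2).ne'
            rw [mul_add, mul_one, pow_add, norm_mul]
            field_simp
        _ ≤ C₄ * ‖(p : ℚ_[p]) ^ (2 * (j + 1))‖ := by
            gcongr
            exact le_add_of_nonneg_left hB₂0.le
  obtain ⟨b, b', hbb', hb1, hw1, hw'1⟩ := hC q q' k hqq' hqd hq1 hk
  have hb'b := mul_comm_one ℚ_[p] hbb'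
  have hdb : dag b' * dag b = 1 := by rw [← hmul, hbb', hd1]
  have hww' : (dag b * q * b) * (b' * q' * dag b') = 1 := by
    calc dag b * q * b * (b' * q' * dag b') = dag b * (q * ((b * b') * q')) * dag b' := by
          simp only [mul_assoc]
      _ = 1 := by rw [hbb', one_mul, hqq', mul_one, ← hmul, hb'b, hd1]
  obtain ⟨a₁, m₁, hm₁, ham₁, ha₁B, hm₁B, hm₁B'⟩ := hB _ _ hww'
    (by simp only [hmul, hinv, hqd, mul_assoc]) hw1 hw'1 ⟨b' * a, m, hm, by
      rw [← ham]
      calc dag (b' * a) * (dag b * q * b) * (b' * a)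
          = dag a * (dag b' * dag b) * q * ((b * b') * a) := by simp only [hmul, mul_assoc]
        _ = dag a * q * a := by rw [hdb, hbb', mul_one, one_mul]⟩
  have ha₁s : ‖(p : ℚ_[p]) ^ s • a₁‖ ≤ 1 := norm_pow_smul_anti _ (le_max_left _ _) (hs₁ _ ha₁B)
  have hm₁s : ‖(p : ℚ_[p]) ^ (2 * s) • m₁‖ ≤ 1 :=
    norm_pow_smul_anti _ (by have := le_max_right s₁ s₂; omega) (hs₂ _ hm₁B)
  set b₁ := ((p : ℚ_[p]) ^ k • b) * ((p : ℚ_[p]) ^ s • a₁) with hb₁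
  set n : ℚ_[p] := (p : ℚ_[p]) ^ (2 * k) * ((p : ℚ_[p]) ^ (2 * s) • m₁) with hn
  have hn0 : n ≠ 0 := mul_ne_zero (hp0 _) (smul_ne_zero (hp0 _) hm₁)
  have hbn : dag b₁ * q * b₁ = algebraMap ℚ_[p] E n := by
    have h1 : dag b₁ * q * b₁ = ((p : ℚ_[p]) ^ (2 * k) * (p : ℚ_[p]) ^ (2 * s)) •
        (dag a₁ * (dag b * q * b) * a₁) := by
      simp only [hb₁, hmul, map_smul, smul_mul_assoc, mul_smul_comm, smul_smul, mul_assoc]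
      congr 1
      ring
    rw [h1, ham₁, Algebra.algebraMap_eq_smul_one, Algebra.algebraMap_eq_smul_one, smul_smul, hn,
      smul_eq_mul, mul_assoc]
  refine ⟨b₁, (norm_mul_le _ _).trans (mul_le_one₀ hb1 (norm_nonneg _) ha₁s),
    ⟨n, hn0, ?_, hbn⟩, ?_⟩
  · rw [hn, norm_mul]
    exact mul_le_one₀ (hp1 _) (norm_nonneg _) hm₁s
  -- taking determinants in `b₁† q b₁ = n`
  have hdet : ‖LinearMap.det (mulLeft ℚ_[p] b₁)‖ ^ 2 * ‖LinearMap.det (mulLeft ℚ_[p] q)‖ =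
      ‖n‖ ^ d := by
    rw [← norm_pow, hd, ← norm_pow, ← norm_mul, ← det_algebraMap (E := E) n, ← hbn,
      det_mul (dag b₁ * q), det_mul (dag b₁), det_dag dag hmul hinv]
    congr 1
    ring
  have hqn : ‖LinearMap.det (mulLeft ℚ_[p] q)‖ ≤ c₀ * ‖n‖ := by
    have h1 : 1 ≤ B * ‖m₁‖ := by
      rwa [inv_le_iff_one_le_mul₀ (norm_pos_iff.2 hm₁)] at hm₁B'
    calc _ ≤ C₄ * ‖(p : ℚ_[p]) ^ (2 * k)‖ := hkD
      _ ≤ C₄ * ‖(p : ℚ_[p]) ^ (2 * k)‖ * (B * ‖m₁‖) :=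
          le_mul_of_one_le_right (by positivity) h1
      _ = c₀ * ‖n‖ := by
          have := (hp0' (2 * s)).ne'
          simp only [c₀, hn, norm_mul, smul_eq_mul]
          field_simp
  have hpow : ‖LinearMap.det (mulLeft ℚ_[p] q)‖ ^ (d - 1) * ‖LinearMap.det (mulLeft ℚ_[p] q)‖ =
      ‖LinearMap.det (mulLeft ℚ_[p] q)‖ ^ d := by
    rcases Nat.eq_zero_or_pos d with h0 | h0
    -- for `E = 0` both sides are `1`
    · rw [LinearMap.det_eq_one_of_finrank_eq_zero h0]
      simp
    · rw [← pow_succ, Nat.sub_add_cancel h0]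
  refine le_of_mul_le_mul_right ?_ hDq
  rw [hpow, mul_assoc, hdet, ← mul_pow]
  gcongr

end Analytic

/-! ### The norm attached to an order -/

section Order

/-- A `ℤ_p`-basis of an order is a `ℚ_p`-basis of the algebra, in which the order consists of the
vectors with integral coordinates. -/
lemma exists_basis_of_order (p : ℕ) [Fact p.Prime] (E : Type*) [Ring E] [Algebra ℚ_[p] E]
    [Algebra ℤ_[p] E] [IsScalarTower ℤ_[p] ℚ_[p] E] (R : Subalgebra ℤ_[p] E)
    (hRfg : (Subalgebra.toSubmodule R).FG)
    (hRspan : Submodule.span ℚ_[p] (R : Set E) = ⊤) :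
    ∃ (n : ℕ) (v : Basis (Fin n) ℚ_[p] E), ∀ x, x ∈ R ↔ ∀ i, ‖v.equivFun x i‖ ≤ 1 := by
  have htf : Module.IsTorsionFree ℤ_[p] E := .trans_faithfulSMul ℤ_[p] ℚ_[p] E
  let L : Submodule ℤ_[p] E := Subalgebra.toSubmodule R
  have hfin : Module.Finite ℤ_[p] L := Module.Finite.iff_fg.2 hRfg
  let u := Module.finBasis ℤ_[p] L
  let w : Fin (finrank ℤ_[p] L) → E := fun i => u i
  have hli : LinearIndependent ℚ_[p] w := by
    rw [← LinearIndependent.iff_fractionRing ℤ_[p] ℚ_[p]]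
    exact u.linearIndependent.map' L.subtype L.ker_subtype
  have hspan : Submodule.span ℤ_[p] (Set.range w) = L := by
    have : Set.range w = L.subtype '' Set.range u := by
      rw [← Set.range_comp]
      rfl
    rw [this, Submodule.span_image, u.span_eq, Submodule.map_top, Submodule.range_subtype]
  have htop : ⊤ ≤ Submodule.span ℚ_[p] (Set.range w) := by
    rw [← hRspan, Submodule.span_le]
    intro x hx
    have hx' : x ∈ Submodule.span ℤ_[p] (Set.range w) := by
      rw [hspan]
      exact hx
    exact Submodule.span_subset_span ℤ_[p] ℚ_[p] _ hx'
  let v := Basis.mk hli htop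
  refine ⟨_, v, fun x => ?_⟩
  have h1 : x ∈ R ↔ x ∈ Submodule.span ℤ_[p] (Set.range v) := by
    rw [Basis.coe_mk, hspan]
    rfl
  rw [h1, v.mem_span_iff_repr_mem ℤ_[p] x]
  refine forall_congr' fun i => ⟨?_, fun h => ⟨⟨_, h⟩, rfl⟩⟩
  rintro ⟨z, hz⟩
  rw [Basis.equivFun_apply, ← hz]
  exact z.2

/-- Every vector is a scalar multiple of a vector of the unit ball, with the norm carried by the
scalar: the supremum norm takes its values in the value group. -/
lemma exists_unit_ball_scaling {p : ℕ} [Fact p.Prime] {E : Type*} [Ring E] [Algebra ℚ_[p] E]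
    {n : ℕ} (v : Basis (Fin n) ℚ_[p] E) {R : Set E} (hR : ∀ x, ‖v.equivFun x‖ ≤ 1 ↔ x ∈ R)
    (x : E) : ∃ (z : ℚ_[p]) (y : E), y ∈ R ∧ x = z • y ∧ ‖v.equivFun x‖ = ‖z‖ := by
  rcases eq_or_ne x 0 with rfl | hx
  · exact ⟨0, 0, (hR 0).1 (by simp), by simp, by simp⟩
  have hne : v.equivFun x ≠ 0 := by simpa using hx
  obtain ⟨i₀, -⟩ := Function.ne_iff.1 hne
  have : Nonempty (Fin n) := ⟨i₀⟩
  obtain ⟨i, hi⟩ := Finite.exists_max fun i => ‖v.equivFun x i‖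
  have hni : ‖v.equivFun x‖ = ‖v.equivFun x i‖ :=
    le_antisymm ((pi_norm_le_iff_of_nonneg (norm_nonneg _)).2 hi) (norm_le_pi_norm _ i)
  have hz : v.equivFun x i ≠ 0 := by
    rw [← norm_ne_zero_iff, ← hni]
    exact norm_ne_zero_iff.2 hne
  refine ⟨v.equivFun x i, (v.equivFun x i)⁻¹ • x, (hR _).1 ?_, ?_, hni⟩
  · rw [map_smul, norm_smul, norm_inv, hni, inv_mul_cancel₀ (norm_ne_zero_iff.2 hz)]
  · rw [smul_smul, mul_inv_cancel₀ hz, one_smul]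

/-- The bound for a submultiplicative norm transported from `ℚ_p ^ n` along a linear isomorphism. -/
lemma exists_bound_of_equiv (p : ℕ) [Fact p.Prime] (E : Type*) [Ring E] [Algebra ℚ_[p] E]
    [FiniteDimensional ℚ_[p] E] [IsSemisimpleRing E] {n : ℕ} (e : E ≃ₗ[ℚ_[p]] (Fin n → ℚ_[p]))
    (hN : ∀ x y : E, ‖e (x * y)‖ ≤ ‖e x‖ * ‖e y‖)
    (hadd : ∀ x y : E, ‖e x‖ ≤ 1 → ‖e y‖ ≤ 1 → ‖e (x + y)‖ ≤ 1) (hone : ‖e 1‖ ≤ 1)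
    (dag : E →ₗ[ℚ_[p]] E) (hmul : ∀ x y, dag (x * y) = dag y * dag x)
    (hinv : ∀ x, dag (dag x) = x) (hnorm : ∀ x, ‖e (dag x)‖ = ‖e x‖) :
    ∃ c : ℝ, 0 < c ∧ ∀ q : E, ‖e q‖ ≤ 1 →
      (∃ (a : E) (m : ℚ_[p]), m ≠ 0 ∧ dag a * q * a = algebraMap ℚ_[p] E m) →
      ∃ b : E, ‖e b‖ ≤ 1 ∧
        (∃ n : ℚ_[p], n ≠ 0 ∧ ‖n‖ ≤ 1 ∧ dag b * q * b = algebraMap ℚ_[p] E n) ∧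
        ‖LinearMap.det (mulLeft ℚ_[p] q)‖ ^ (finrank ℚ_[p] E - 1) ≤
          c * ‖LinearMap.det (mulLeft ℚ_[p] b)‖ ^ 2 := by
  let nacg : NormedAddCommGroup E :=
    NormedAddCommGroup.induced E (Fin n → ℚ_[p]) e e.injective
  let nr : NormedRing E :=
    { toNorm := nacg.toNorm
      toRing := inferInstance
      toMetricSpace := nacg.toMetricSpace
      dist_eq := nacg.dist_eq
      norm_mul_le := hN }
  let na : NormedAlgebra ℚ_[p] E :=
    { toAlgebra := inferInstance
      norm_smul_le := fun z x => by
        change ‖e (z • x)‖ ≤ ‖z‖ * ‖e x‖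
        rw [map_smul, norm_smul] }
  exact @exists_bound_normed p _ E nr na ‹_› ‹_› hadd hone dag hmul hinv hnorm

end Order

end PolarBound

/-- **The local degree bound at an arbitrary prime `p`** (regular-representation
instance): for a semisimple `ℚ_p`-algebra with involution `(E,†)` and a `†`-stable order
`R`, there is a constant `c_p` such that whenever `q ∈ R` satisfies `a† q a ∈ ℚ_p^×` for
some `a ∈ E`, there is `b ∈ R` with `b† q b ∈ ℤ_p \ {0}` and
`|det L_q|_p^{d-1} ≤ c_p·|det L_b|_p²`, where `d = dim_{ℚ_p} E`. -/
theorem arith_bound_local_non_split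
    (p : ℕ) [Fact p.Prime]
    (E : Type*) [Ring E] [Algebra ℚ_[p] E] [FiniteDimensional ℚ_[p] E]
    [IsSemisimpleRing E]
    [Algebra ℤ_[p] E] [IsScalarTower ℤ_[p] ℚ_[p] E]
    (dag : E → E) (hdag : IsInvolutionQp p E dag)
    -- `R` is a `†`-stable order in `E`
    (R : Subalgebra ℤ_[p] E)
    (hRfg : (Subalgebra.toSubmodule R).FG)
    (hRspan : Submodule.span ℚ_[p] (R : Set E) = ⊤)
    (hRdag : ∀ x ∈ R, dag x ∈ R) :
    ∃ c : ℝ, 0 < c ∧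
      ∀ q ∈ R,
        (∃ (a : E) (m : ℚ_[p]), m ≠ 0 ∧ dag a * q * a = algebraMap ℚ_[p] E m) →
        ∃ b ∈ R, (∃ n : ℤ_[p], n ≠ 0 ∧ dag b * q * b = algebraMap ℚ_[p] E (n : ℚ_[p])) ∧
          ‖LinearMap.det (LinearMap.mulLeft ℚ_[p] q)‖ ^ (Module.finrank ℚ_[p] E - 1) ≤
            c * ‖LinearMap.det (LinearMap.mulLeft ℚ_[p] b)‖ ^ 2 := by
  obtain ⟨hda, hdm, hdi, hdr⟩ := hdag
  let dagL : E →ₗ[ℚ_[p]] E :=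
    { toFun := dag
      map_add' := hda
      map_smul' := fun r x => by
        rw [Algebra.smul_def, hdm, hdr, ← Algebra.commutes, ← Algebra.smul_def]
        rfl }
  obtain ⟨n, v, hv⟩ := PolarBound.exists_basis_of_order p E R hRfg hRspan
  -- the norm on `E` with unit ball `R`
  let N : E → ℝ := fun x => ‖v.equivFun x‖
  have hNR : ∀ x, N x ≤ 1 ↔ x ∈ R := fun x => by
    rw [hv]
    exact pi_norm_le_iff_of_nonneg zero_le_one
  have hNs : ∀ (z : ℚ_[p]) x, N (z • x) = ‖z‖ * N x := fun z x => by
    simp only [N, map_smul, norm_smul]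
  have hscale : ∀ x : E, ∃ (z : ℚ_[p]) (y : E), y ∈ R ∧ x = z • y ∧ N x = ‖z‖ := fun x =>
    PolarBound.exists_unit_ball_scaling v hNR x
  have hNmul : ∀ x y, N (x * y) ≤ N x * N y := fun x y => by
    obtain ⟨z, x', hx', rfl, hz⟩ := hscale x
    obtain ⟨z', y', hy', rfl, hz'⟩ := hscale y
    rw [hz, hz', smul_mul_smul_comm, hNs, norm_mul]
    exact mul_le_of_le_one_right (by positivity) ((hNR _).2 (R.mul_mem hx' hy'))
  have hNdag' : ∀ x, N (dagL x) ≤ N x := fun x => by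
    obtain ⟨z, x', hx', rfl, hz⟩ := hscale x
    rw [hz, map_smul, hNs]
    exact mul_le_of_le_one_right (norm_nonneg _) ((hNR _).2 (hRdag _ hx'))
  have hNdag : ∀ x, N (dagL x) = N x := fun x =>
    le_antisymm (hNdag' x) (by simpa [dagL, hdi] using hNdag' (dagL x))
  obtain ⟨c, hc, h⟩ := PolarBound.exists_bound_of_equiv p E v.equivFun hNmul
    (fun x y hx hy => (hNR _).2 (R.add_mem ((hNR x).1 hx) ((hNR y).1 hy)))
    ((hNR 1).2 R.one_mem) dagL hdm hdi hNdag
  refine ⟨c, hc, fun q hq hex => ?_⟩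
  obtain ⟨b, hb, ⟨m, hm0, hm1, hm⟩, hbd⟩ := h q ((hNR q).2 hq) hex
  exact ⟨b, (hNR b).1 hb, ⟨⟨m, hm1⟩, fun h0 => hm0 (congrArg Subtype.val h0), hm⟩, hbd⟩
end
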